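/- Let N be a lattice of rank d ≥ 1 with dual lattice M = Hom_ℤ(N, ℤ), and let σ ⊆ N_ℝ be a rational polyhedral cone with dim σ = d and σ ≠ N_ℝ. Let U ⊆ N_ℝ be a convex set of the form U = conv(F) + cone(G), where F ⊆ N_ℝ is finite and G ⊆ N is finite, such that: 0 ∈ U; ⋃_{t>0} tU = σ; and N ∩ U contains a finite set generating σ as a convex cone. Let a > 0 and suppose N ∩ int(aU) = ∅. Then there exists a nonzero φ ∈ M with φ_ℝ nonnegative on σ and φ_ℝ(U) ⊆ [0, 1/γ(d,a)], where γ(d,a) is defined by γ(1,a) = a and γ(d,a) = γ(d−1, a²/d²) for d ≥ 2 (equivalently γ(d,a) = a^(2^(d−1)) / ∏_{i=1}^{d} i^(2^(i−1))). -/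

import Mathlib

open Pointwise

/-- The lattice `ℤ^d` viewed inside its realification `ℝ^d`
(a model of an arbitrary lattice of rank `d`); its dual lattice `M` is again `ℤ^d`,
paired by `⟨m, e⟩ = ∑ i, m i * e i`. -/
def intPts (d : ℕ) : Set (Fin d → ℝ) := {x | ∀ i, ∃ n : ℤ, x i = (n : ℝ)}

/-- The convex cone generated by a set `s`: all finite nonnegative linear
combinations of elements of `s`. -/
def coneHull {V : Type*} [AddCommGroup V] [Module ℝ V] (s : Set V) : Set V :=
  {x | ∃ (n : ℕ) (c : Fin n → ℝ) (v : Fin n → V),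
    (∀ i, 0 ≤ c i) ∧ (∀ i, v i ∈ s) ∧ x = ∑ i, c i • v i}

/-- The function `γ(d, a)` defined recursively by `γ(1, a) = a` and
`γ(d, a) = γ(d - 1, a² / d²)` for `d ≥ 2`. -/
noncomputable def gammaFn : ℕ → ℝ → ℝ
  | 0, a => a
  | 1, a => a
  | n + 2, a => gammaFn (n + 1) (a ^ 2 / ((n : ℝ) + 2) ^ 2)

/-!
Measure distances by the gauge of `U - U` and put `b = a / d`. If `N` misses the interior of
`a • U`, then a covering argument gives a proper subspace `L` such that `N \ L` stays at distance at
least `b` from `L`; the induction on `d` has three cases.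

* `L ≠ 0` misses the interior of `U`: project along `L`.
* `L = 0`: project along a lattice generator in a face of the cone over `U`. Dirichlet
  approximation shows that the image of `N` misses the interior of the image of `b ^ 2 • U`.
* `L` meets the interior of `U`: by Minkowski's theorem the vectors of `U - U` have bounded
  determinants modulo `L`. Hence the section of a bounded dilate of `U` by `L` is again generated
  by lattice points, and linear programming duality lifts the form found on `L`, at a vertex of
  the dual polyhedron whose denominator is minimal.
-/

section LinearProgramming

variable {ι W : Type*} [AddCommGroup W] [Module ℝ W]

lemma nonneg_of_mem_hull {v : ι → W} {φ : W →ₗ[ℝ] ℝ} (hφ : ∀ i, 0 ≤ φ (v i)) {x : W}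
    (hx : x ∈ PointedCone.hull ℝ (Set.range v)) : 0 ≤ φ x := by
  have hle : PointedCone.hull ℝ (Set.range v) ≤ (PointedCone.positive ℝ ℝ).comap φ :=
    Submodule.span_le.2 (Set.range_subset_iff.2 hφ)
  exact hle hx

lemma exists_nonneg_add_mul_eq_zero [Finite ι] {α β : ι → ℝ} (hα : 0 ≤ α) (hβ : ∃ i, β i < 0) :
    ∃ t : ℝ, 0 ≤ t ∧ (∀ i, 0 ≤ α i + t * β i) ∧ ∃ i, β i < 0 ∧ α i + t * β i = 0 := by
  obtain ⟨j, hj, hmin⟩ := Set.exists_min_image {i | β i < 0} (fun i => α i / -β i)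
    (Set.toFinite _) hβ
  have ht : 0 ≤ α j / -β j := div_nonneg (hα j) (neg_nonneg.2 hj.le)
  refine ⟨α j / -β j, ht, fun i => ?_, j, hj, by
    rw [div_neg, neg_mul, div_mul_cancel₀ _ hj.ne, add_neg_cancel]⟩
  obtain hi | hi := lt_or_ge (β i) 0
  · have := hmin i hi
    rw [le_div_iff₀ (neg_pos.2 hi)] at this
    linarith
  · exact add_nonneg (hα i) (mul_nonneg ht hi)

lemma exists_fin_extension_of_linearIndepOn [FiniteDimensional ℝ W] {k : ℕ}
    (hk : Module.finrank ℝ W = k) {x : ι → W} {s T : Set ι} (hs : LinearIndepOn ℝ x s)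
    (hsT : s ⊆ T) (hT : Submodule.span ℝ (x '' T) = ⊤) :
    ∃ f : Fin k → ι, Function.Injective f ∧ LinearIndependent ℝ (x ∘ f) ∧
      s ⊆ Set.range f ∧ Set.range f ⊆ T := by
  classical
  obtain ⟨b, hbT, hsb, hTb, hb⟩ := exists_linearIndepOn_extension hs hsT
  have hspan : Submodule.span ℝ (Set.range fun i : b => x i) = ⊤ := by
    rw [← Set.image_eq_range, eq_top_iff, ← hT]
    exact Submodule.span_le.2 hTb
  have := LinearIndependent.finite hb
  cases nonempty_fintype b
  have hcard : Fintype.card b = k := by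
    rw [← finrank_span_eq_card hb, hspan, finrank_top, hk]
  set e : Fin k ≃ b := (Fintype.equivFinOfCardEq hcard).symm
  have hrange : Set.range (fun j => (e j : ι)) = b := by
    rw [Set.range_comp' Subtype.val e, e.range_eq_univ, Set.image_univ, Subtype.range_coe]
  refine ⟨fun j => e j, Subtype.val_injective.comp e.injective, hb.comp e e.injective, ?_, ?_⟩ <;>
    rwa [hrange]

lemma exists_linearMap_le_sublinear_eq {β : W → ℝ}
    (hsmul : ∀ t : ℝ, 0 < t → ∀ v, β (t • v) ≤ t * β v) (hadd : ∀ u v, β (u + v) ≤ β u + β v)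
    (hzero : β 0 = 0) (w : W) : ∃ g : W →ₗ[ℝ] ℝ, (∀ v, g v ≤ β v) ∧ g w = β w := by
  have hsmul' (t : ℝ) (ht : 0 < t) (v : W) : β (t • v) = t * β v := by
    refine (hsmul t ht v).antisymm ?_
    have := hsmul t⁻¹ (inv_pos.2 ht) (t • v)
    rwa [inv_smul_smul₀ ht.ne', ← div_eq_inv_mul, le_div_iff₀ ht, mul_comm] at this
  have hmul_le (t : ℝ) : t * β w ≤ β (t • w) := by
    obtain ht | rfl | ht := lt_trichotomy t 0
    · have := hadd (t • w) (-t • w)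
      rw [← add_smul, add_neg_cancel, zero_smul, hzero, hsmul' (-t) (by linarith)] at this
      linarith
    · simp [hzero]
    · exact (hsmul' t ht w).ge
  have hwd (t : ℝ) (ht : t • w = 0) : t • β w = 0 := by
    obtain rfl | rfl := smul_eq_zero.1 ht <;> simp [hzero]
  set f : W →ₗ.[ℝ] ℝ := LinearPMap.mkSpanSingleton' w (β w) hwd
  have hf (t : ℝ) (ht : t • w ∈ f.domain) : f ⟨t • w, ht⟩ = t * β w :=
    LinearPMap.mkSpanSingleton'_apply _ _ _ _ _
  obtain ⟨g, hgf, hgβ⟩ := exists_extension_of_le_sublinear f β hsmul' hadd (by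
    rintro ⟨v, hv⟩
    obtain ⟨t, rfl⟩ := Submodule.mem_span_singleton.1 hv
    exact (hf t hv).trans_le (hmul_le t))
  refine ⟨g, hgβ, ?_⟩
  have hw : (1 : ℝ) • w ∈ f.domain := Submodule.mem_span_singleton.2 ⟨1, rfl⟩
  simpa using (hgf ⟨_, hw⟩).trans (hf 1 hw)

/-- The linear form `η` is a vertex of the dual polyhedron `{η | ∀ i, 0 ≤ h i + η (x i)}`: the
constraints indexed by `f` are tight at `η` and their vectors are linearly independent. -/
structure IsDualBasis {k : ℕ} (x : ι → W) (h : ι → ℝ) (η : W →ₗ[ℝ] ℝ) (f : Fin k → ι) : Prop where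
  nonneg : ∀ i, 0 ≤ h i + η (x i)
  linearIndependent : LinearIndependent ℝ (x ∘ f)
  tight : ∀ j, h (f j) + η (x (f j)) = 0

lemma exists_dual_spanning [Finite ι] {x : ι → W} {h : ι → ℝ}
    (hx : PointedCone.hull ℝ (Set.range x) = ⊤) {η₀ : W →ₗ[ℝ] ℝ}
    (hη₀ : ∀ i, 0 ≤ h i + η₀ (x i)) :
    ∃ η : W →ₗ[ℝ] ℝ, (∀ i, 0 ≤ h i + η (x i)) ∧ (∀ i, h i + η₀ (x i) = 0 → h i + η (x i) = 0) ∧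
      Submodule.span ℝ (x '' {i | h i + η (x i) = 0}) = ⊤ := by
  set tight : (W →ₗ[ℝ] ℝ) → Set ι := fun η => {i | h i + η (x i) = 0}
  set Q : Set (W →ₗ[ℝ] ℝ) := {η | (∀ i, 0 ≤ h i + η (x i)) ∧ tight η₀ ⊆ tight η}
  obtain ⟨T, ⟨η, ⟨hη, hηT⟩, rfl⟩, hmax⟩ := (Set.toFinite (tight '' Q)).exists_maximal
    ⟨_, η₀, ⟨hη₀, subset_rfl⟩, rfl⟩
  refine ⟨η, hη, hηT, by_contra fun hspan => ?_⟩
  obtain ⟨ζ, hζ, hζT⟩ := Submodule.exists_le_ker_of_lt_top _ (lt_top_iff_ne_top.2 hspan)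
  have hζneg : ∃ i, ζ (x i) < 0 := by
    by_contra! hpos
    have hnn (w : W) : 0 ≤ ζ w := nonneg_of_mem_hull hpos (hx ▸ Submodule.mem_top)
    exact hζ (LinearMap.ext fun w => ((neg_nonneg.1 (map_neg ζ w ▸ hnn (-w))).antisymm (hnn w)))
  obtain ⟨t, -, hnn, j, hj, hj0⟩ := exists_nonneg_add_mul_eq_zero hη hζneg
  have hη' (i : ι) : h i + (η + t • ζ) (x i) = h i + η (x i) + t * ζ (x i) := by
    simp [add_assoc]
  have hζ0 {i : ι} (hi : i ∈ tight η) : ζ (x i) = 0 :=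
    hζT (Submodule.subset_span (Set.mem_image_of_mem x hi))
  have hsub : tight η ⊆ tight (η + t • ζ) := fun i hi => by
    simpa only [tight, Set.mem_ofPred_eq, hη', hζ0 hi, mul_zero, add_zero] using hi
  have hle := hmax ⟨η + t • ζ, ⟨fun i => (hη' i).ge.trans' (hnn i), hηT.trans hsub⟩, rfl⟩ hsub
  exact hj.ne (hζ0 (hle ((hη' j).trans hj0)))

lemma exists_mem_ker_of_forall_nonneg [Finite ι] {e : ι → W}
    (hspan : Submodule.span ℝ (Set.range e) = ⊤) (hd : 2 ≤ Module.finrank ℝ W)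
    {ψ : W →ₗ[ℝ] ℝ} (hψ : ψ ≠ 0) (hψe : ∀ i, 0 ≤ ψ (e i)) :
    ∃ (i : ι) (ψ' : W →ₗ[ℝ] ℝ), ψ' ≠ 0 ∧ (∀ l, 0 ≤ ψ' (e l)) ∧ e i ≠ 0 ∧ ψ' (e i) = 0 := by
  have hne {χ : W →ₗ[ℝ] ℝ} (hχ : χ ≠ 0) : ∃ i, χ (e i) ≠ 0 := by
    by_contra! hall
    exact hχ (LinearMap.ext_on_range hspan hall)
  obtain ⟨m, hm⟩ := hne hψ
  obtain ⟨ζ, hζ, hζm⟩ := Submodule.exists_le_ker_of_lt_top (Submodule.span ℝ {e m}) (by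
    refine lt_top_iff_ne_top.2 fun htop => ?_
    have := finrank_span_singleton (K := ℝ) (v := e m) fun h0 => hm (by rw [h0, map_zero])
    rw [htop, finrank_top] at this
    omega)
  replace hζm : ζ (e m) = 0 := hζm (Submodule.mem_span_singleton_self _)
  wlog hneg : ∃ i, ζ (e i) < 0 generalizing ζ
  · push Not at hneg
    refine this (-ζ) (neg_ne_zero.2 hζ) (by simp [hζm]) ?_
    obtain ⟨i, hi⟩ := hne hζ
    exact ⟨i, neg_lt_zero.2 ((hneg i).lt_of_ne' hi)⟩
  obtain ⟨t, -, hnn, i, hi, hi0⟩ := exists_nonneg_add_mul_eq_zero hψe hneg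
  refine ⟨i, ψ + t • ζ, fun h0 => hm ?_, hnn, fun h0 => hi.ne (by rw [h0, map_zero]), hi0⟩
  simpa [hζm] using DFunLike.congr_fun h0 (e m)

variable [Fintype ι]

lemma mem_hull_range {v : ι → W} {x : W} :
    x ∈ PointedCone.hull ℝ (Set.range v) ↔ ∃ c : ι → ℝ, 0 ≤ c ∧ ∑ i, c i • v i = x := by
  rw [PointedCone.hull, Submodule.mem_span_range_iff_exists_fun]
  constructor
  · rintro ⟨c, rfl⟩
    exact ⟨fun i => c i, fun i => (c i).2, rfl⟩
  · rintro ⟨c, hc, rfl⟩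
    exact ⟨fun i => ⟨c i, hc i⟩, rfl⟩

lemma linearIndepOn_iff_forall_fintype_sum {x : ι → W} {s : Set ι} :
    LinearIndepOn ℝ x s ↔
      ∀ g : ι → ℝ, Function.support g ⊆ s → ∑ i, g i • x i = 0 → g = 0 := by
  have hsum (l : ι →₀ ℝ) : Finsupp.linearCombination ℝ x l = ∑ i, l i • x i :=
    Finsupp.sum_fintype _ _ (by simp)
  simp only [linearIndepOn_iff, Finsupp.mem_supported, hsum]
  refine ⟨fun H g hg hg0 => ?_, fun H l hl hl0 => ?_⟩
  · simpa using congrArg (⇑) (H (Finsupp.equivFunOnFinite.symm g) (by simpa using hg) hg0)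
  · exact DFunLike.coe_injective (H l (by simpa using hl) hl0)

lemma exists_relation_of_not_linearIndepOn {x : ι → W} {s : Set ι}
    (hdep : ¬ LinearIndepOn ℝ x s) (h : ι → ℝ) :
    ∃ g : ι → ℝ, g ≠ 0 ∧ Function.support g ⊆ s ∧ ∑ i, g i • x i = 0 ∧ ∑ i, g i * h i ≤ 0 := by
  rw [linearIndepOn_iff_forall_fintype_sum] at hdep
  push Not at hdep
  obtain ⟨g, hgs, hgx, hg⟩ := hdep
  obtain hle | hge := le_total (∑ i, g i * h i) 0
  · exact ⟨g, hg, hgs, hgx, hle⟩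
  · exact ⟨-g, neg_ne_zero.2 hg, by rwa [Function.support_neg], by simpa using hgx,
      by simpa using hge⟩

/-- A real cost `h` on the vectors `x i` under which no nonnegative relation between them has
negative total cost: the linear program `min {∑ c i * h i | c ≥ 0, ∑ c i • x i = w}` is bounded. -/
def BoundedCost (x : ι → W) (h : ι → ℝ) : Prop :=
  ∀ c : ι → ℝ, 0 ≤ c → ∑ i, c i • x i = 0 → 0 ≤ ∑ i, c i * h i

namespace BoundedCost

variable {x : ι → W} {h : ι → ℝ}

lemma exists_linearIndepOn_support (H : BoundedCost x h) (c : ι → ℝ) (hc : 0 ≤ c) :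
    ∃ c' : ι → ℝ, 0 ≤ c' ∧ Function.support c' ⊆ Function.support c ∧
      LinearIndepOn ℝ x (Function.support c') ∧ ∑ i, c' i • x i = ∑ i, c i • x i ∧
      ∑ i, c' i * h i ≤ ∑ i, c i * h i := by
  induction hn : (Function.support c).ncard using Nat.strong_induction_on generalizing c with
  | _ n ih =>
  by_cases hind : LinearIndepOn ℝ x (Function.support c)
  · exact ⟨c, hc, subset_rfl, hind, rfl, le_rfl⟩
  obtain ⟨g, hgneg, hgc, hgx, hgh⟩ : ∃ g : ι → ℝ, (∃ i, g i < 0) ∧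
      Function.support g ⊆ Function.support c ∧ ∑ i, g i • x i = 0 ∧ ∑ i, g i * h i ≤ 0 := by
    obtain ⟨g, hg, hgc, hgx, hgh⟩ := exists_relation_of_not_linearIndepOn hind h
    by_cases hneg : ∃ i, g i < 0
    · exact ⟨g, hneg, hgc, hgx, hgh⟩
    push Not at hneg
    have hpos := H g hneg hgx
    obtain ⟨i, hi⟩ := Function.ne_iff.1 hg
    exact ⟨-g, ⟨i, neg_lt_zero.2 ((hneg i).lt_of_ne' hi)⟩,
      by rwa [Function.support_neg], by simpa using hgx, by simpa using hpos⟩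
  obtain ⟨t, ht, hnn, j, hj, hj0⟩ := exists_nonneg_add_mul_eq_zero hc hgneg
  set c₁ : ι → ℝ := fun i => c i + t * g i
  have hsub : Function.support c₁ ⊆ Function.support c := fun i hi hci => by
    have hgi : g i = 0 := by_contra fun h0 => hgc h0 hci
    exact hi (by simp [c₁, hci, hgi])
  have hlt : (Function.support c₁).ncard < n :=
    hn ▸ Set.ncard_lt_ncard (hsub.ssubset_of_mem_notMem (hgc hj.ne) fun hj' => hj' hj0)
  obtain ⟨c', hc', hsup, hind', hsum, hcost⟩ := ih _ hlt c₁ hnn rfl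
  refine ⟨c', hc', hsup.trans hsub, hind', hsum.trans ?_, hcost.trans ?_⟩
  · simp only [c₁, add_smul, mul_smul, Finset.sum_add_distrib, ← Finset.smul_sum, hgx, smul_zero,
      add_zero]
  · simp only [c₁, add_mul, mul_assoc, Finset.sum_add_distrib, ← Finset.mul_sum]
    linarith [mul_nonpos_of_nonneg_of_nonpos ht hgh]

lemma exists_isMinOn (H : BoundedCost x h) (hx : PointedCone.hull ℝ (Set.range x) = ⊤) (w : W) :
    ∃ c : ι → ℝ, 0 ≤ c ∧ LinearIndepOn ℝ x (Function.support c) ∧ ∑ i, c i • x i = w ∧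
      ∀ c' : ι → ℝ, 0 ≤ c' → ∑ i, c' i • x i = w → ∑ i, c i * h i ≤ ∑ i, c' i * h i := by
  set B : Set (ι → ℝ) :=
    {c | 0 ≤ c ∧ LinearIndepOn ℝ x (Function.support c) ∧ ∑ i, c i • x i = w}
  have hbasic (c : ι → ℝ) (hc : 0 ≤ c) (hcw : ∑ i, c i • x i = w) :
      ∃ c' ∈ B, ∑ i, c' i * h i ≤ ∑ i, c i * h i := by
    obtain ⟨c', hc', -, hind, hsum, hcost⟩ := H.exists_linearIndepOn_support c hc
    exact ⟨c', ⟨hc', hind, hsum.trans hcw⟩, hcost⟩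
  have hinj : Set.InjOn Function.support B := by
    intro c ⟨_, hind, hc⟩ c' ⟨_, _, hc'⟩ hsupp
    refine sub_eq_zero.1 (linearIndepOn_iff_forall_fintype_sum.1 hind (c - c') ?_ ?_)
    · exact (Function.support_sub c c').trans (by rw [← hsupp, Set.union_self])
    · simp [sub_smul, hc, hc']
  have hfin : B.Finite := .of_injOn (Set.mapsTo_univ _ _) hinj Set.finite_univ
  obtain ⟨c₀, hc₀, hc₀w⟩ := mem_hull_range.1 (hx ▸ Submodule.mem_top : w ∈ _)
  obtain ⟨b, hb, -⟩ := hbasic c₀ hc₀ hc₀w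
  obtain ⟨c, hc, hmin⟩ := Set.exists_min_image B (fun c => ∑ i, c i * h i) hfin ⟨b, hb⟩
  refine ⟨c, hc.1, hc.2.1, hc.2.2, fun c' hc' hcw' => ?_⟩
  obtain ⟨b', hb', hle⟩ := hbasic c' hc' hcw'
  exact (hmin b' hb').trans hle

/-- The optimal value is a sublinear function of `w`, so it has a linear minorant touching it
at `w`; the negative of this minorant is the dual optimum. -/
lemma exists_complementary_slackness (H : BoundedCost x h)
    (hx : PointedCone.hull ℝ (Set.range x) = ⊤) (w : W) :
    ∃ (η : W →ₗ[ℝ] ℝ) (c : ι → ℝ), (∀ i, 0 ≤ h i + η (x i)) ∧ 0 ≤ c ∧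
      LinearIndepOn ℝ x (Function.support c) ∧ ∑ i, c i • x i = w ∧
      ∀ i, c i ≠ 0 → h i + η (x i) = 0 := by
  classical
  choose c hc hind hsum hmin using H.exists_isMinOn hx
  obtain ⟨g, hgβ, hgw⟩ := exists_linearMap_le_sublinear_eq (β := fun v => ∑ i, c v i * h i)
    (fun t ht v => by
      simpa [Finset.mul_sum, mul_assoc] using hmin (t • v) (t • c v)
        (smul_nonneg ht.le (hc v)) (by simp [mul_smul, ← Finset.smul_sum, hsum]))
    (fun u v => by
      simpa [add_mul, Finset.sum_add_distrib] using hmin (u + v) (c u + c v)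
        (add_nonneg (hc u) (hc v)) (by simp [add_smul, Finset.sum_add_distrib, hsum]))
    (le_antisymm (by simpa using hmin 0 0 le_rfl (by simp)) (H _ (hc 0) (hsum 0))) w
  have hgh (i : ι) : g (x i) ≤ h i := (hgβ _).trans <| by
    simpa [Pi.single_apply] using hmin (x i) (Pi.single i 1)
      (by simp) (by simp [Pi.single_apply])
  have hslack : ∑ i, c w i * (h i - g (x i)) = 0 := by
    rw [← hsum w, map_sum, hsum w] at hgw
    simp only [map_smul, smul_eq_mul] at hgw
    simp only [mul_sub, Finset.sum_sub_distrib, hgw, sub_self]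
  refine ⟨-g, c w, fun i => by simpa using hgh i, hc w, hind w, hsum w, fun i hi => ?_⟩
  have := (Finset.sum_eq_zero_iff_of_nonneg fun i _ =>
    mul_nonneg (hc w i) (sub_nonneg.2 (hgh i))).1 hslack i (Finset.mem_univ i)
  simpa [hi, sub_eq_add_neg] using this

theorem exists_isDualBasis [FiniteDimensional ℝ W] {k : ℕ} (hk : Module.finrank ℝ W = k)
    (H : BoundedCost x h) (hx : PointedCone.hull ℝ (Set.range x) = ⊤) (w : W) :
    ∃ (η : W →ₗ[ℝ] ℝ) (f : Fin k → ι) (c : Fin k → ℝ),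
      IsDualBasis x h η f ∧ 0 ≤ c ∧ ∑ j, c j • x (f j) = w := by
  obtain ⟨η₀, c, hη₀, hc, hind, hsum, htight⟩ := H.exists_complementary_slackness hx w
  obtain ⟨η, hη, hη₀η, hspan⟩ := exists_dual_spanning hx hη₀
  obtain ⟨f, hf, hfind, hcf, hfT⟩ := exists_fin_extension_of_linearIndepOn hk hind
    (fun i hi => hη₀η i (htight i hi)) hspan
  refine ⟨η, f, c ∘ f, ⟨hη, hfind, fun j => hfT ⟨j, rfl⟩⟩, fun j => hc _, hsum ▸ ?_⟩
  refine Fintype.sum_of_injective f hf _ _ (fun i hi => ?_) fun j => rfl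
  have hci : c i = 0 := by_contra fun h0 => hi (hcf h0)
  rw [hci, zero_smul]

end BoundedCost

lemma exists_basis_conic_combination [FiniteDimensional ℝ W] {k : ℕ}
    (hk : Module.finrank ℝ W = k) {x : ι → W} (hx : Submodule.span ℝ (Set.range x) = ⊤)
    {c : ι → ℝ} (hc : 0 ≤ c) :
    ∃ (f : Fin k → ι) (c' : Fin k → ℝ), LinearIndependent ℝ (x ∘ f) ∧ 0 ≤ c' ∧
      (∀ j, c' j ≠ 0 → c (f j) ≠ 0) ∧ ∑ j, c' j • x (f j) = ∑ i, c i • x i := by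
  obtain ⟨c', hc', hsupp, hind, hsum, -⟩ :=
    BoundedCost.exists_linearIndepOn_support (x := x) (h := 0) (fun _ _ _ => by simp) c hc
  obtain ⟨f, hf, hfind, hcf, -⟩ := exists_fin_extension_of_linearIndepOn hk hind
    (Set.subset_univ _) (by rwa [Set.image_univ])
  refine ⟨f, c' ∘ f, hfind, fun j => hc' _, fun j hj => hsupp hj, hsum ▸ ?_⟩
  refine Fintype.sum_of_injective f hf _ _ (fun i hi => ?_) fun j => rfl
  have hci : c' i = 0 := by_contra fun h0 => hi (hcf h0)
  rw [hci, zero_smul]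

end LinearProgramming

lemma exists_sum_smul_eq_smul {κ V : Type*} [Fintype κ] [AddCommGroup V] [Module ℝ V] {U : Set V}
    (hU : Convex ℝ U) (hne : U.Nonempty) {c : κ → ℝ} (hc : ∀ j, 0 ≤ c j) {v : κ → V}
    (hv : ∀ j, v j ∈ U) : ∃ u ∈ U, ∑ j, c j • v j = (∑ j, c j) • u := by
  obtain hs | hs := (Finset.sum_nonneg fun j _ => hc j).eq_or_lt'
  · obtain ⟨u, hu⟩ := hne
    have hc0 (j) : c j = 0 :=
      (Finset.sum_eq_zero_iff_of_nonneg fun j _ => hc j).1 hs j (Finset.mem_univ j)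
    exact ⟨u, hu, by simp [hc0]⟩
  · refine ⟨Finset.univ.centerMass c v, hU.centerMass_mem (fun j _ => hc j) hs fun j _ => hv j, ?_⟩
    rw [Finset.centerMass, smul_inv_smul₀ hs.ne']

lemma exists_sum_smul_eq_sum_abs_smul {κ V : Type*} [Fintype κ] [AddCommGroup V] [Module ℝ V]
    {U : Set V} (hU : Convex ℝ U) (hne : U.Nonempty) (t : κ → ℝ) {y : κ → V}
    (hy : ∀ j, y j ∈ U - U) : ∃ y' ∈ U - U, ∑ j, t j • y j = (∑ j, |t j|) • y' := by
  have hsign (j : κ) : ∃ y' ∈ U - U, t j • y j = |t j| • y' := by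
    obtain htj | htj := abs_choice (t j)
    · exact ⟨y j, hy j, by rw [htj]⟩
    · refine ⟨-y j, ?_, by rw [htj, neg_smul_neg]⟩
      rw [← Set.mem_neg, neg_sub]
      exact hy j
  choose y' hy' hyy' using hsign
  simp only [hyy']
  exact exists_sum_smul_eq_smul (hU.sub hU) (hne.sub hne) (fun j => abs_nonneg (t j)) hy'

lemma exists_add_sum_smul_eq_smul {κ V : Type*} [Fintype κ] [AddCommGroup V] [Module ℝ V]
    {U : Set V} (hU : Convex ℝ U) {u : V} (hu : u ∈ U) {c : κ → ℝ} (hc : ∀ j, 0 ≤ c j) {v : κ → V}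
    (hv : ∀ j, v j ∈ U) : ∃ u' ∈ U, u + ∑ j, c j • v j = (1 + ∑ j, c j) • u' := by
  obtain ⟨v', hv', hsum⟩ := exists_sum_smul_eq_smul hU ⟨u, hu⟩ hc hv
  have hmem : u + (∑ j, c j) • v' ∈ (1 : ℝ) • U + (∑ j, c j) • U :=
    Set.add_mem_add ((one_smul ℝ U).symm ▸ hu) (Set.smul_mem_smul_set hv')
  rw [← hU.add_smul zero_le_one (Finset.sum_nonneg fun j _ => hc j)] at hmem
  obtain ⟨u', hu', huu'⟩ := hmem
  exact ⟨u', hu', by rw [hsum, ← huu']⟩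

section Interior

variable {V W : Type*} [NormedAddCommGroup V] [NormedSpace ℝ V] [NormedAddCommGroup W]
  [NormedSpace ℝ W] {U : Set V} {c x : V}

lemma exists_pos_add_smul_mem_of_mem_interior (hc : c ∈ interior U) (v : V) :
    ∃ ε : ℝ, 0 < ε ∧ c + ε • v ∈ U := by
  have hcont : Filter.Tendsto (fun ε : ℝ => c + ε • v) (nhdsWithin 0 (Set.Ioi 0)) (nhds c) := by
    have : Continuous fun ε : ℝ => c + ε • v := by fun_prop
    simpa using (this.tendsto 0).mono_left nhdsWithin_le_nhds
  obtain ⟨ε, hεU, hε⟩ :=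
    ((hcont.eventually (mem_interior_iff_mem_nhds.1 hc)).and self_mem_nhdsWithin).exists
  exact ⟨ε, hε, hεU⟩

lemma mem_interior_of_add_smul_sub_mem (hU : Convex ℝ U) (hc : c ∈ interior U) {ε : ℝ}
    (hε : 0 < ε) (hx : x + ε • (x - c) ∈ U) : x ∈ interior U := by
  convert hU.combo_interior_self_mem_interior hc hx (a := ε / (1 + ε)) (b := 1 / (1 + ε))
    (by positivity) (by positivity) (by field_simp; ring) using 1
  match_scalars <;> field_simp
  ring

lemma pos_of_mem_interior {ψ : V →ₗ[ℝ] ℝ} (hψ : ψ ≠ 0) (hψU : ∀ u ∈ U, 0 ≤ ψ u)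
    (hc : c ∈ interior U) : 0 < ψ c := by
  obtain ⟨v, hv⟩ : ∃ v, ψ v < 0 := by
    obtain ⟨v, hv⟩ := DFunLike.ne_iff.1 hψ
    obtain hv | hv := lt_or_gt_of_ne hv
    · exact ⟨v, hv⟩
    · exact ⟨-v, by simpa using hv⟩
  obtain ⟨ε, hε, hεU⟩ := exists_pos_add_smul_mem_of_mem_interior hc v
  have := hψU _ hεU
  rw [map_add, map_smul, smul_eq_mul] at this
  nlinarith

lemma exists_mem_interior_of_mem_interior_image (hU : Convex ℝ U) (hc : c ∈ interior U)
    (f : V →ₗ[ℝ] W) {w : W} (hw : w ∈ interior (f '' U)) : ∃ u ∈ interior U, f u = w := by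
  obtain ⟨ε, hε, v, hv, hvw⟩ := exists_pos_add_smul_mem_of_mem_interior hw (w - f c)
  refine ⟨(ε / (1 + ε)) • c + (1 / (1 + ε)) • v, hU.combo_interior_self_mem_interior hc hv
    (by positivity) (by positivity) (by field_simp; ring), ?_⟩
  rw [map_add, map_smul, map_smul, hvw]
  match_scalars <;> field_simp
  ring

lemma coe_mem_interior_of_mem_interior_preimage (hU : Convex ℝ U) {L : Submodule ℝ V}
    (hc : c ∈ interior U) (hcL : c ∈ L) {y : L}
    (hy : y ∈ interior ((↑) ⁻¹' U : Set L)) : (y : V) ∈ interior U := by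
  obtain ⟨ε, hε, hεU⟩ := exists_pos_add_smul_mem_of_mem_interior hy (y - ⟨c, hcL⟩)
  exact mem_interior_of_add_smul_sub_mem hU hc hε (by simpa using hεU)

lemma sum_smul_mem_interior {κ : Type*} [Fintype κ] [FiniteDimensional ℝ V]
    (hU : Convex ℝ U) (h0 : (0 : V) ∈ U)
    (B : Module.Basis κ ℝ V) (hB : ∀ j, B j ∈ U) {w : κ → ℝ} (hw : ∀ j, 0 < w j)
    (hw1 : ∑ j, w j < 1) : ∑ j, w j • B j ∈ interior U := by
  have hopen : IsOpen {v : V | (∀ j, 0 < B.equivFun v j) ∧ ∑ j, B.equivFun v j < 1} := by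
    have hcont : Continuous B.equivFun := B.equivFun.toLinearMap.continuous_of_finiteDimensional
    simp only [Set.ofPred_and, Set.ofPred_forall]
    exact (isOpen_iInter_of_finite fun j =>
      isOpen_lt continuous_const (by fun_prop)).inter (isOpen_lt (by fun_prop) continuous_const)
  refine interior_maximal (fun v hv => ?_) hopen ?_
  · rw [← B.sum_equivFun v]
    obtain ⟨u, hu, huv⟩ := exists_sum_smul_eq_smul hU ⟨0, h0⟩ (fun j => (hv.1 j).le) hB
    exact huv ▸ hU.smul_mem_of_zero_mem h0 hu ⟨Finset.sum_nonneg fun j _ => (hv.1 j).le, hv.2.le⟩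
  · have : B.equivFun (∑ j, w j • B j) = w := by
      rw [← B.equivFun_symm_apply, LinearEquiv.apply_symm_apply]
    simp only [Set.mem_ofPred_eq, this]
    exact ⟨hw, hw1⟩

end Interior

section Definitions

variable {V : Type*} [AddCommGroup V] [Module ℝ V]

/-- A convex set `U` containing `0` together with generators `e i ∈ N ∩ U`, which span the ambient
space linearly and whose convex cone contains `U`. -/
structure LatticeGenerated {ι : Type*} (N : AddSubgroup V) (U : Set V) (e : ι → V) : Prop where
  convex : Convex ℝ U
  zero_mem : 0 ∈ U
  gen_mem_lattice : ∀ i, e i ∈ N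
  gen_mem : ∀ i, e i ∈ U
  span_gen : Submodule.span ℝ (Set.range e) = ⊤
  subset_hull : U ⊆ PointedCone.hull ℝ (Set.range e)

/-- The interior of the dilate `a • U` contains no point of `N`. The dilation is applied to the
interior points of `U`, so this is the usual condition only for `a ≠ 0`. -/
def LatticeFree [TopologicalSpace V] (N : AddSubgroup V) (U : Set V) (a : ℝ) : Prop :=
  ∀ u ∈ interior U, a • u ∉ N

/-- Some nonzero linear form that is integral on `N` takes values in `[0, B]` on `U`. -/
def HasIntegralForm (N : AddSubgroup V) (U : Set V) (B : ℝ) : Prop :=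
  ∃ φ : V →ₗ[ℝ] ℝ, φ ≠ 0 ∧ (∀ z ∈ N, ∃ n : ℤ, φ z = n) ∧ ∀ u ∈ U, φ u ∈ Set.Icc 0 B

/-- The points of `N` outside `L` stay at distance at least `x` from `L`, where distances are
measured by the gauge of the symmetric convex set `U - U`. -/
def Separated (N : AddSubgroup V) (U : Set V) (L : Submodule ℝ V) (x : ℝ) : Prop :=
  ∀ z ∈ N, ∀ t ∈ Set.Ico 0 x, ∀ y ∈ U - U, z - t • y ∈ L → z ∈ L

lemma HasIntegralForm.mono {N : AddSubgroup V} {U : Set V} {B B' : ℝ} (h : HasIntegralForm N U B)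
    (hB : B ≤ B') : HasIntegralForm N U B' := by
  obtain ⟨φ, hφ, hφN, hφU⟩ := h
  exact ⟨φ, hφ, hφN, fun u hu => ⟨(hφU u hu).1, (hφU u hu).2.trans hB⟩⟩

lemma HasIntegralForm.comap {W : Type*} [AddCommGroup W] [Module ℝ W] {N : AddSubgroup V}
    {U : Set V} {B : ℝ} {f : V →ₗ[ℝ] W} (hf : Function.Surjective f)
    (h : HasIntegralForm (N.map f.toAddMonoidHom) (f '' U) B) : HasIntegralForm N U B := by
  obtain ⟨φ, hφ, hφN, hφU⟩ := h
  refine ⟨φ ∘ₗ f, fun h0 => hφ ?_, fun z hz => hφN _ ⟨z, hz, rfl⟩, fun u hu => hφU _ ⟨u, hu, rfl⟩⟩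
  exact (LinearMap.cancel_right hf).1 (h0.trans (LinearMap.zero_comp f).symm)

variable {ι : Type*} {N : AddSubgroup V} {U : Set V} {e : ι → V}

lemma LatticeGenerated.map {W : Type*} [AddCommGroup W] [Module ℝ W]
    (h : LatticeGenerated N U e) {f : V →ₗ[ℝ] W} (hf : Function.Surjective f) :
    LatticeGenerated (N.map f.toAddMonoidHom) (f '' U) (f ∘ e) where
  convex := h.convex.linear_image f
  zero_mem := ⟨0, h.zero_mem, map_zero f⟩
  gen_mem_lattice i := ⟨e i, h.gen_mem_lattice i, rfl⟩
  gen_mem i := ⟨e i, h.gen_mem i, rfl⟩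
  span_gen := by
    rw [Set.range_comp, Submodule.span_image, h.span_gen, Submodule.map_top,
      LinearMap.range_eq_top.2 hf]
  subset_hull := by
    rintro _ ⟨u, hu, rfl⟩
    rw [Set.range_comp]
    exact (Submodule.span_image (f.restrictScalars {c : ℝ // 0 ≤ c})).ge ⟨u, h.subset_hull hu, rfl⟩

lemma LatticeGenerated.exists_basis_gen [FiniteDimensional ℝ V] (h : LatticeGenerated N U e) :
    ∃ (f : Fin (Module.finrank ℝ V) → ι) (B : Module.Basis (Fin (Module.finrank ℝ V)) ℝ V),
      ∀ j, B j = e (f j) := by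
  obtain ⟨f, -, hf, -⟩ := exists_fin_extension_of_linearIndepOn rfl
    (linearIndepOn_empty ℝ e) (Set.subset_univ _) (by rw [Set.image_univ, h.span_gen])
  exact ⟨f, .mk hf (hf.span_eq_top_of_card_eq_finrank' (by simp)).ge, fun j => by simp⟩

end Definitions

namespace LatticeGenerated

variable {V ι : Type*} [NormedAddCommGroup V] [NormedSpace ℝ V] [FiniteDimensional ℝ V]
  {N : AddSubgroup V} {U : Set V} {e : ι → V} {a : ℝ}

lemma interior_nonempty (h : LatticeGenerated N U e) : (interior U).Nonempty := by
  obtain ⟨f, B, hB⟩ := h.exists_basis_gen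
  refine ⟨_, sum_smul_mem_interior h.convex h.zero_mem B (fun j => hB j ▸ h.gen_mem _)
    (w := fun _ => 1 / (Module.finrank ℝ V + 1)) (fun _ => by positivity) ?_⟩
  rw [Finset.sum_const, Finset.card_univ, Fintype.card_fin, nsmul_eq_mul, mul_one_div,
    div_lt_one (by positivity)]
  exact lt_add_one _

lemma le_finrank (h : LatticeGenerated N U e) (ha : 0 < a) (hfree : LatticeFree N U a) :
    a ≤ Module.finrank ℝ V := by
  by_contra! hlt
  obtain ⟨f, B, hB⟩ := h.exists_basis_gen
  refine hfree _ (sum_smul_mem_interior h.convex h.zero_mem B (fun j => hB j ▸ h.gen_mem _)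
    (w := fun _ => a⁻¹) (fun _ => by positivity) ?_) ?_
  · rwa [Finset.sum_const, Finset.card_univ, Fintype.card_fin, nsmul_eq_mul, ← div_eq_mul_inv,
      div_lt_one ha]
  · rw [← Finset.smul_sum, smul_inv_smul₀ ha.ne']
    exact sum_mem fun j _ => hB j ▸ h.gen_mem_lattice _

end LatticeGenerated

section Covering

variable {V ι : Type*} [NormedAddCommGroup V] [NormedSpace ℝ V]
  {N : AddSubgroup V} {U : Set V} {b : ℝ}

/-- If `z ∈ N` is too close to `L`, then moving along `z` shows that `N` also avoids a slightly
smaller translated dilate of `U` modulo `L ⊔ ℝ z`. -/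
lemma notMem_sup_span_of_close (hU : Convex ℝ U) {L : Submodule ℝ V} {c z v v' : V} {t μ : ℝ}
    (hμ : 0 ≤ μ) (hμt : μ < t) (hc : ∀ n ∈ N, ∀ u ∈ interior U, n - (c + t • u) ∉ L)
    (hz : z ∈ N) (hv : v ∈ U) (hv' : v' ∈ U) (hzL : z - μ • (v - v') ∈ L) {n : V} (hn : n ∈ N)
    {u : V} (hu : u ∈ interior U) :
    n - ((c + μ • v') + (t - μ) • u) ∉ L ⊔ Submodule.span ℝ {z} := by
  intro hmem
  obtain ⟨l, hl, w, hw, hlw⟩ := Submodule.mem_sup.1 hmem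
  obtain ⟨r, rfl⟩ := Submodule.mem_span_singleton.1 hw
  have ht : 0 < t := hμ.trans_lt hμt
  have hv'' : v' + Int.fract r • (v - v') ∈ U :=
    hU.add_smul_sub_mem hv' hv ⟨Int.fract_nonneg r, (Int.fract_lt_one r).le⟩
  refine hc (n - ⌊r⌋ • z) (sub_mem hn (zsmul_mem hz _)) _
    (hU.combo_interior_self_mem_interior hu hv'' (a := (t - μ) / t) (b := μ / t)
      (div_pos (sub_pos.2 hμt) ht) (by positivity) (by field_simp; ring)) ?_
  convert L.add_mem hl (L.smul_mem (Int.fract r) hzL) using 1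
  have hl' : l = n - ((c + μ • v') + (t - μ) • u) - r • z := eq_sub_of_add_eq hlw
  have hr : r • z = (⌊r⌋ : ℝ) • z + Int.fract r • z := by rw [← add_smul, Int.floor_add_fract]
  rw [hl', hr, ← Int.cast_smul_eq_zsmul ℝ, smul_add t, smul_smul t, smul_smul t,
    mul_div_cancel₀ _ ht.ne', mul_div_cancel₀ _ ht.ne']
  module

lemma exists_separated_of_forall_notMem [FiniteDimensional ℝ V] (hU : Convex ℝ U)
    (hne : (interior U).Nonempty) (m : ℕ) (L : Submodule ℝ V) (c : V) (t : ℝ)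
    (hm : Module.finrank ℝ L + m = Module.finrank ℝ V) (hmt : m * b ≤ t)
    (hc : ∀ n ∈ N, ∀ u ∈ interior U, n - (c + t • u) ∉ L) :
    ∃ L' : Submodule ℝ V, L' ≠ ⊤ ∧ Separated N U L' b := by
  induction m generalizing L c t with
  | zero =>
    obtain ⟨u, hu⟩ := hne
    rw [Submodule.eq_top_of_finrank_eq hm] at hc
    exact (hc 0 N.zero_mem u hu Submodule.mem_top).elim
  | succ m ih =>
    by_cases hsep : Separated N U L b
    · refine ⟨L, ?_, hsep⟩
      rintro rfl
      simp at hm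
    unfold Separated at hsep
    push Not at hsep
    obtain ⟨z, hz, μ, ⟨hμ, hμb⟩, _, ⟨v, hv, v', hv', rfl⟩, hzμ, hzL⟩ := hsep
    push_cast at hmt
    have hmb : 0 ≤ m * b := mul_nonneg m.cast_nonneg (hμ.trans hμb.le)
    refine ih (L ⊔ Submodule.span ℝ {z}) (c + μ • v') (t - μ) ?_ (by linarith)
      fun n hn u hu => notMem_sup_span_of_close hU hμ (by linarith) hc hz hv hv' hzμ hn hu
    rw [Submodule.finrank_sup_span_singleton hzL]
    omega

theorem LatticeGenerated.exists_separated [FiniteDimensional ℝ V] {e : ι → V} {a : ℝ}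
    (h : LatticeGenerated N U e) (ha : 0 ≤ a) (hfree : LatticeFree N U a) :
    ∃ L : Submodule ℝ V, L ≠ ⊤ ∧ Separated N U L (a / Module.finrank ℝ V) := by
  refine exists_separated_of_forall_notMem h.convex h.interior_nonempty (Module.finrank ℝ V) ⊥ 0 a
    (by simp) ?_ fun n hn u hu hmem => hfree u hu ?_
  · obtain hd | hd := (Module.finrank ℝ V).eq_zero_or_pos
    · simpa [hd] using ha
    · rw [mul_div_cancel₀ _ (by positivity)]
  · rw [zero_add, Submodule.mem_bot, sub_eq_zero] at hmem
    rwa [← hmem]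

end Covering

section GammaFn

lemma gammaFn_succ {n : ℕ} (hn : 1 ≤ n) (a : ℝ) :
    gammaFn (n + 1) a = gammaFn n ((a / (n + 1)) ^ 2) := by
  obtain ⟨m, rfl⟩ := Nat.exists_eq_add_of_le' hn
  rw [gammaFn, div_pow]
  push_cast
  ring_nf

lemma gammaFn_succ_mul {n : ℕ} (hn : 1 ≤ n) (b : ℝ) :
    gammaFn (n + 1) (((n + 1 : ℕ) : ℝ) * b) = gammaFn n (b ^ 2) := by
  rw [gammaFn_succ hn, Nat.cast_add_one, mul_div_cancel_left₀ _ n.cast_add_one_ne_zero]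

lemma gammaFn_pos {n : ℕ} (hn : 1 ≤ n) {a : ℝ} (ha : 0 < a) : 0 < gammaFn n a := by
  induction n, hn using Nat.le_induction generalizing a with
  | base => exact ha
  | succ n hn ih => exact gammaFn_succ hn a ▸ ih (by positivity)

lemma gammaFn_le_gammaFn {n : ℕ} (hn : 1 ≤ n) {a b : ℝ} (ha : 0 ≤ a) (hab : a ≤ b) :
    gammaFn n a ≤ gammaFn n b := by
  induction n, hn using Nat.le_induction generalizing a b with
  | base => exact hab
  | succ n hn ih =>
    rw [gammaFn_succ hn, gammaFn_succ hn]
    exact ih (by positivity) (by gcongr)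

lemma gammaFn_anti_left {k n : ℕ} (hk : 1 ≤ k) (hkn : k ≤ n) {b : ℝ} (hb : 0 ≤ b) (hb1 : b ≤ 1) :
    gammaFn n b ≤ gammaFn k b := by
  induction n, hkn using Nat.le_induction with
  | base => rfl
  | succ n hkn ih =>
    rw [gammaFn_succ (hk.trans hkn)]
    refine (gammaFn_le_gammaFn (hk.trans hkn) (by positivity) ?_).trans ih
    calc (b / (n + 1)) ^ 2 ≤ b ^ 2 := by
          gcongr
          exact div_le_self hb (le_add_of_nonneg_left n.cast_nonneg)
      _ ≤ b := pow_le_of_le_one hb hb1 two_ne_zero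

lemma gammaFn_mul_le_of_lt {k n : ℕ} (hk : 1 ≤ k) (hkn : k < n) {b : ℝ} (hb : 0 ≤ b)
    (hb1 : b ≤ 1) : gammaFn n (n * b) ≤ gammaFn k b := by
  obtain ⟨m, rfl⟩ : ∃ m, n = m + 1 := ⟨n - 1, by omega⟩
  have hkm : k ≤ m := Nat.lt_succ_iff.1 hkn
  calc gammaFn (m + 1) (((m + 1 : ℕ) : ℝ) * b) = gammaFn m (b ^ 2) :=
        gammaFn_succ_mul (hk.trans hkm) b
    _ ≤ gammaFn m b :=
        gammaFn_le_gammaFn (hk.trans hkm) (by positivity) (pow_le_of_le_one hb hb1 two_ne_zero)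
    _ ≤ gammaFn k b := gammaFn_anti_left hk hkm hb hb1

lemma natCast_div_pow_self_pos (k : ℕ) {b : ℝ} (hb : 0 < b) : 0 < (k / b) ^ k := by
  obtain rfl | hk := k.eq_zero_or_pos
  · simp
  · positivity

lemma pow_div_le_pow_div {r : ℕ} (hr : 1 ≤ r) (k : ℕ) {b : ℝ} (hb : 0 < b) (hb1 : b ≤ 1) :
    (((k + 1 : ℕ) : ℝ) / b) ^ k ≤ (k / (b ^ 2 / (r + k : ℕ))) ^ k := by
  obtain rfl | hk := k.eq_zero_or_pos
  · simp
  refine pow_le_pow_left₀ (by positivity) ?_ k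
  have hkr : ((k + 1 : ℕ) : ℝ) ≤ k * (r + k : ℕ) := by
    exact_mod_cast (by omega : k + 1 ≤ r + k).trans (Nat.le_mul_of_pos_left _ hk)
  rw [div_div_eq_mul_div]
  gcongr
  exact pow_le_of_le_one hb.le hb1 two_ne_zero

lemma gammaFn_add_mul_le {r : ℕ} (hr : 1 ≤ r) (k : ℕ) {b : ℝ} (hb : 0 < b) (hb1 : b ≤ 1) :
    gammaFn (r + k) ((r + k : ℕ) * b) ≤ gammaFn r ((r + k : ℕ) * b / (k / b) ^ k) := by
  induction k generalizing b with
  | zero => simp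
  | succ k ih =>
    have hrk : (1 : ℝ) ≤ (r + k : ℕ) := by exact_mod_cast hr.trans (Nat.le_add_right r k)
    have hrk0 : (0 : ℝ) < (r + k : ℕ) := zero_lt_one.trans_le hrk
    set b' : ℝ := b ^ 2 / (r + k : ℕ)
    have hb' : 0 < b' := by positivity
    have hbb' : (r + k : ℕ) * b' = b ^ 2 := mul_div_cancel₀ _ hrk0.ne'
    calc gammaFn (r + k + 1) ((r + k + 1 : ℕ) * b)
        = gammaFn (r + k) ((r + k : ℕ) * b') := by rw [gammaFn_succ_mul (by omega), hbb']
      _ ≤ gammaFn r ((r + k : ℕ) * b' / (k / b') ^ k) :=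
        ih hb' (div_le_one_of_le₀ ((pow_le_one₀ hb.le hb1).trans hrk) hrk0.le)
      _ ≤ gammaFn r ((r + k + 1 : ℕ) * b / ((k + 1 : ℕ) / b) ^ (k + 1)) := by
        refine gammaFn_le_gammaFn hr (by positivity) ?_
        rw [hbb', div_le_div_iff₀ (natCast_div_pow_self_pos k hb') (by positivity)]
        calc b ^ 2 * ((k + 1 : ℕ) / b) ^ (k + 1)
            = (k + 1 : ℕ) * b * ((k + 1 : ℕ) / b) ^ k := by
              rw [pow_succ' (_ / b), ← mul_assoc, sq, mul_assoc b b, mul_div_cancel₀ _ hb.ne',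
                mul_comm b]
          _ ≤ (r + k + 1 : ℕ) * b * (k / b') ^ k := by
            have := pow_div_le_pow_div hr k hb hb1
            gcongr
            omega

end GammaFn

section IntegerPoints

lemma coe_span_basisFun (k : ℕ) :
    (Submodule.span ℤ (Set.range (Pi.basisFun ℝ (Fin k))) : Set (Fin k → ℝ)) = intPts k := by
  ext x
  rw [SetLike.mem_coe, Module.Basis.mem_span_iff_repr_mem]
  simp [intPts, eq_comm]

/-- Minkowski's theorem for the image of the cube `|t i| < r` under `t ↦ ∑ i, t i • y i`. -/
lemma exists_abs_lt_sum_smul_mem_intPts {k : ℕ} {y : Fin k → Fin k → ℝ} {r : ℝ} (hr : 0 < r)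
    (hy : 1 < |(Matrix.of y).det| * r ^ k) :
    ∃ t : Fin k → ℝ, (∀ i, |t i| < r) ∧ ∑ i, t i • y i ∈ intPts k ∧ ∑ i, t i • y i ≠ 0 := by
  set T : (Fin k → ℝ) →ₗ[ℝ] (Fin k → ℝ) := (Matrix.of y).vecMulLinear
  have hT (t : Fin k → ℝ) : T t = ∑ i, t i • y i := Matrix.vecMul_eq_sum t (Matrix.of y)
  have hdet : LinearMap.det T = (Matrix.of y).det := by
    rw [show T = Matrix.toLin' (Matrix.of y).transpose by ext; simp [T], LinearMap.det_toLin',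
      Matrix.det_transpose]
  have hconv : Convex ℝ (T '' Metric.ball 0 r) := (convex_ball 0 r).linear_image T
  have hsymm : ∀ x ∈ T '' Metric.ball 0 r, -x ∈ T '' Metric.ball 0 r := by
    rintro _ ⟨t, ht, rfl⟩
    exact ⟨-t, by simpa using ht, map_neg T t⟩
  have hvol : MeasureTheory.volume (ZSpan.fundamentalDomain (Pi.basisFun ℝ (Fin k))) *
      2 ^ Module.finrank ℝ (Fin k → ℝ) < MeasureTheory.volume (T '' Metric.ball 0 r) := by
    have hone : (Matrix.of (Pi.basisFun ℝ (Fin k))).det = 1 := by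
      rw [← Matrix.det_one (n := Fin k) (R := ℝ)]
      congr 1
      ext i j
      simp [Matrix.one_apply, Pi.single_apply, eq_comm]
    rw [ZSpan.volume_fundamentalDomain, hone, MeasureTheory.Measure.addHaar_image_linearMap,
      Real.volume_pi_ball _ hr, hdet, abs_one, ENNReal.ofReal_one, one_mul,
      ← ENNReal.ofReal_mul (abs_nonneg _), mul_pow, Module.finrank_fin_fun, Fintype.card_fin,
      ← ENNReal.ofReal_ofNat 2, ← ENNReal.ofReal_pow zero_le_two,
      ENNReal.ofReal_lt_ofReal_iff_of_nonneg (by positivity)]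
    nlinarith [pow_pos (zero_lt_two' ℝ) k]
  have : Countable (Submodule.span ℤ (Set.range (Pi.basisFun ℝ (Fin k)))).toAddSubgroup :=
    inferInstanceAs (Countable (Submodule.span ℤ (Set.range (Pi.basisFun ℝ (Fin k)))))
  obtain ⟨⟨x, hx⟩, hx0, t, ht, rfl⟩ :=
    MeasureTheory.exists_ne_zero_mem_lattice_of_measure_mul_two_pow_lt_measure
      (ZSpan.isAddFundamentalDomain' (Pi.basisFun ℝ (Fin k)) MeasureTheory.volume) hsymm hconv hvol
  refine ⟨t, fun i => (norm_le_pi_norm t i).trans_lt (by simpa using ht), ?_, fun h0 => hx0 ?_⟩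
  · rw [← hT, ← coe_span_basisFun]
    exact hx
  · exact Subtype.ext ((hT t).trans h0)

end IntegerPoints

section Coordinates

variable {V : Type*} [AddCommGroup V] [Module ℝ V]

lemma exists_surjective_ker_eq [FiniteDimensional ℝ V] {L : Submodule ℝ V} {k : ℕ}
    (hk : Module.finrank ℝ L + k = Module.finrank ℝ V) :
    ∃ f : V →ₗ[ℝ] Fin k → ℝ, Function.Surjective f ∧ LinearMap.ker f = L := by
  have hquot : Module.finrank ℝ (V ⧸ L) = k := by
    have := L.finrank_quotient_add_finrank
    omega
  set B := Module.finBasisOfFinrankEq ℝ (V ⧸ L) hquot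
  refine ⟨B.equivFun.toLinearMap ∘ₗ L.mkQ, B.equivFun.surjective.comp L.mkQ_surjective, ?_⟩
  rw [LinearEquiv.ker_comp, L.ker_mkQ]

lemma exists_equiv_image_eq_intPts {k : ℕ} (Λ : Submodule ℤ (Fin k → ℝ)) [DiscreteTopology Λ]
    (hΛ : Submodule.span ℝ (Λ : Set (Fin k → ℝ)) = ⊤) :
    ∃ g : (Fin k → ℝ) ≃ₗ[ℝ] (Fin k → ℝ), g '' Λ = intPts k := by
  have : IsZLattice ℝ Λ := ⟨hΛ⟩
  set B := (IsZLattice.basis Λ).ofZLatticeBasis ℝ Λ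
  refine ⟨B.equivFun, ?_⟩
  rw [← (IsZLattice.basis Λ).ofZLatticeBasis_span ℝ, ← coe_span_basisFun]
  have hB := congrArg SetLike.coe (Submodule.map_span (B.equivFun.toLinearMap.restrictScalars ℤ)
    (Set.range B))
  refine hB.trans ?_
  rw [← Set.range_comp]
  congr 3
  ext i j
  simp [Pi.single_apply, eq_comm]

variable {N : AddSubgroup V} {U : Set V} {b : ℝ} {k : ℕ} {π : V →ₗ[ℝ] Fin k → ℝ}

/-- Otherwise Minkowski's theorem would produce a point of `N` violating the separation. -/
lemma Separated.abs_det_le (hU : Convex ℝ U) (hne : U.Nonempty) (hb : 0 < b)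
    (hsep : Separated N U (LinearMap.ker π) b) (hπ : π '' N = intPts k)
    {y : Fin k → V} (hy : ∀ i, y i ∈ U - U) :
    |(Matrix.of fun i => π (y i)).det| ≤ (k / b) ^ k := by
  obtain rfl | hk := k.eq_zero_or_pos
  · simp
  by_contra! hlt
  have hr : 1 < |(Matrix.of fun i => π (y i)).det| * (b / k) ^ k := by
    rwa [← inv_div, inv_pow, ← div_eq_mul_inv, one_lt_div (by positivity)]
  obtain ⟨t, ht, htN, ht0⟩ := exists_abs_lt_sum_smul_mem_intPts (by positivity) hr
  obtain ⟨y', hy', hsum⟩ := exists_sum_smul_eq_sum_abs_smul hU hne t hy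
  have hsum' : ∑ i, t i • π (y i) = (∑ i, |t i|) • π y' := by
    simp only [← map_smul, ← map_sum, hsum]
  have hlt : ∑ i, |t i| < b := by
    have := Finset.sum_lt_sum_of_nonempty (s := Finset.univ) ⟨(⟨0, hk⟩ : Fin k), Finset.mem_univ _⟩
      fun i _ => ht i
    rwa [Finset.sum_const, Finset.card_univ, Fintype.card_fin, nsmul_eq_mul,
      mul_div_cancel₀ _ (by positivity)] at this
  obtain ⟨z, hz, hzt⟩ := hπ.ge htN
  refine ht0 (hzt ▸ hsep z hz _ ⟨Finset.sum_nonneg fun i _ => abs_nonneg _, hlt⟩ y' hy' ?_)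
  rw [LinearMap.mem_ker, map_sub, map_smul, hzt, hsum', sub_self]

end Coordinates

section SeparatedCoordinates

variable {V ι : Type*} [NormedAddCommGroup V] [NormedSpace ℝ V] [FiniteDimensional ℝ V]
  {N : AddSubgroup V} {U : Set V} {e : ι → V} {L : Submodule ℝ V} {b : ℝ} {k : ℕ}

lemma Separated.discreteTopology_map (h : LatticeGenerated N U e) (hb : 0 < b)
    (hsep : Separated N U L b) {W : Type*} [NormedAddCommGroup W] [NormedSpace ℝ W]
    [FiniteDimensional ℝ W] {f : V →ₗ[ℝ] W} (hf : Function.Surjective f)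
    (hfL : LinearMap.ker f = L) :
    DiscreteTopology (N.map f.toAddMonoidHom) := by
  obtain ⟨c, hc⟩ := h.interior_nonempty
  have hopen : IsOpen (f '' ((fun u => (b / 2) • (u - c)) '' interior U)) := by
    refine f.isOpenMap_of_finiteDimensional hf _ ?_
    exact ((isOpenMap_smul₀ (by positivity : b / 2 ≠ 0)).comp (isOpenMap_sub_right c)) _
      isOpen_interior
  refine discreteTopology_of_isOpen_singleton_zero ?_
  convert hopen.preimage continuous_subtype_val
  refine Set.eq_of_subset_of_subset ?_ ?_
  · rintro _ rfl
    exact ⟨0, ⟨c, hc, by simp⟩, by simp⟩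
  · rintro ⟨_, z, hz, rfl⟩ ⟨_, ⟨u, hu, rfl⟩, huz⟩
    have hzL := hsep z hz (b / 2) ⟨by positivity, by linarith⟩ (u - c)
      (Set.sub_mem_sub (interior_subset hu) (interior_subset hc)) (by
        rw [← hfL, LinearMap.sub_mem_ker_iff]
        exact huz.symm)
    rw [← hfL, LinearMap.mem_ker] at hzL
    exact Subtype.ext hzL

lemma Separated.exists_coordinates (h : LatticeGenerated N U e) (hb : 0 < b)
    (hsep : Separated N U L b) (hk : Module.finrank ℝ L + k = Module.finrank ℝ V) :
    ∃ π : V →ₗ[ℝ] Fin k → ℝ,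
      Function.Surjective π ∧ LinearMap.ker π = L ∧ π '' N = intPts k := by
  obtain ⟨f, hf, hfL⟩ := exists_surjective_ker_eq hk
  set Λ := AddSubgroup.toIntSubmodule (N.map f.toAddMonoidHom)
  have : DiscreteTopology Λ := hsep.discreteTopology_map h hb hf hfL
  obtain ⟨g, hg⟩ := exists_equiv_image_eq_intPts Λ (by
    rw [eq_top_iff, ← (h.map hf).span_gen]
    exact Submodule.span_mono (Set.range_subset_iff.2 (h.map hf).gen_mem_lattice))
  refine ⟨g.toLinearMap ∘ₗ f, g.surjective.comp hf, by rw [LinearEquiv.ker_comp, hfL], ?_⟩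
  rw [← hg, LinearMap.coe_comp, Set.image_comp]
  rfl

end SeparatedCoordinates

section IntegerDeterminants

variable {k : ℕ} {y : Fin k → Fin k → ℝ}

lemma abs_det_pos_of_linearIndependent (hy : LinearIndependent ℝ y) : 0 < |(Matrix.of y).det| :=
  abs_pos.2 ((Matrix.isUnit_iff_isUnit_det _).1
    (Matrix.linearIndependent_rows_iff_isUnit.1 hy)).ne_zero

lemma exists_map_intCast_eq (hy : ∀ j, y j ∈ intPts k) :
    ∃ Z : Matrix (Fin k) (Fin k) ℤ, Matrix.of y = (Int.castRingHom ℝ).mapMatrix Z := by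
  choose Z hZ using hy
  exact ⟨Matrix.of Z, Matrix.ext hZ⟩

lemma exists_natCast_eq_abs_det (hy : ∀ j, y j ∈ intPts k) :
    ∃ q : ℕ, |(Matrix.of y).det| = q := by
  obtain ⟨Z, hZ⟩ := exists_map_intCast_eq hy
  refine ⟨Z.det.natAbs, ?_⟩
  rw [hZ, ← RingHom.map_det, Nat.cast_natAbs, Int.cast_abs]
  rfl

/-- Cramer's rule. -/
lemma exists_intCast_eq_abs_det_mul {c : Fin k → ℝ} (hy : ∀ j, y j ∈ intPts k)
    (hc : ∑ j, c j • y j ∈ intPts k) (j : Fin k) :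
    ∃ n : ℤ, |(Matrix.of y).det| * c j = n := by
  obtain ⟨Z, hZ⟩ := exists_map_intCast_eq hy
  choose w hw using hc
  have hw' : Matrix.vecMul c (Matrix.of y) = Int.castRingHom ℝ ∘ w :=
    (Matrix.vecMul_eq_sum c _).trans (funext hw)
  have hcramer : (Matrix.of y).det • c = fun i => ((Matrix.vecMul w Z.adjugate i : ℤ) : ℝ) :=
    calc (Matrix.of y).det • c
        = Matrix.vecMul (Matrix.vecMul c (Matrix.of y)) (Matrix.of y).adjugate := by
          rw [Matrix.vecMul_vecMul, Matrix.mul_adjugate, Matrix.vecMul_smul, Matrix.vecMul_one]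
      _ = Matrix.vecMul (Int.castRingHom ℝ ∘ w) ((Int.castRingHom ℝ).mapMatrix Z.adjugate) := by
          rw [hw', RingHom.map_adjugate, hZ]
      _ = fun i => ((Matrix.vecMul w Z.adjugate i : ℤ) : ℝ) := by
          funext i
          exact ((Int.castRingHom ℝ).map_vecMul Z.adjugate w i).symm
  have hj : (Matrix.of y).det * c j = ((Matrix.vecMul w Z.adjugate j : ℤ) : ℝ) := congrFun hcramer j
  obtain hd | hd := abs_choice (Matrix.of y).det
  · exact ⟨_, hd ▸ hj⟩
  · exact ⟨-Matrix.vecMul w Z.adjugate j, by rw [hd, neg_mul, hj, Int.cast_neg]⟩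

lemma det_add_sum_smul (y : Fin k → Fin k → ℝ) (c : Fin k → ℝ) :
    (Matrix.of fun j => y j + ∑ i, c i • y i).det = (Matrix.of y).det * (1 + ∑ i, c i) := by
  have hmul : (Matrix.of fun j => y j + ∑ i, c i • y i) =
      (1 + (Matrix.replicateCol Unit 1 : Matrix (Fin k) Unit ℝ) *
        (Matrix.replicateRow Unit c : Matrix Unit (Fin k) ℝ)) * Matrix.of y := by
    rw [add_mul, one_mul]
    ext j l
    simp [Matrix.mul_apply, Finset.sum_apply]
  rw [hmul, Matrix.det_mul, Matrix.det_one_add_replicateCol_mul_replicateRow, mul_comm]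
  simp [dotProduct]

end IntegerDeterminants

section SeparatedDeterminants

variable {V : Type*} [AddCommGroup V] [Module ℝ V] {N : AddSubgroup V} {U : Set V} {b : ℝ} {k : ℕ}
  {π : V →ₗ[ℝ] Fin k → ℝ} {c : Fin k → ℝ} {f : Fin k → V}

/-- The points `f j - u` of `U - U` have determinant `|det (π ∘ f)| * (1 + ∑ j, c j)`. -/
lemma Separated.abs_det_mul_le (hU : Convex ℝ U) (hb : 0 < b)
    (hsep : Separated N U (LinearMap.ker π) b) (hπ : π '' N = intPts k) {u : V} (hu : u ∈ U)
    (hf : ∀ j, f j ∈ U) (hc : 0 ≤ c) (hsum : π u + ∑ j, c j • π (f j) = 0) :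
    |(Matrix.of fun j => π (f j)).det| * (1 + ∑ j, c j) ≤ (k / b) ^ k := by
  have h := hsep.abs_det_le hU ⟨u, hu⟩ hb hπ fun j => Set.sub_mem_sub (hf j) hu
  have hsub (j : Fin k) : π (f j - u) = π (f j) + ∑ i, c i • π (f i) := by
    rw [map_sub, eq_neg_of_add_eq_zero_right hsum, sub_eq_add_neg]
  have hpos : 0 ≤ 1 + ∑ j, c j := add_nonneg zero_le_one (Finset.sum_nonneg fun j _ => hc j)
  simp only [hsub] at h
  rwa [det_add_sum_smul, abs_mul, abs_of_nonneg hpos] at h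

lemma abs_det_smul_sub_mem (hπ : π '' N = intPts k) (hf : ∀ j, f j ∈ N) {z : V} (hz : z ∈ N)
    (hsum : π z = ∑ j, c j • π (f j)) :
    |(Matrix.of fun j => π (f j)).det| • (z - ∑ j, c j • f j) ∈ N := by
  have hint {x : V} (hx : x ∈ N) : π x ∈ intPts k := hπ ▸ Set.mem_image_of_mem π hx
  obtain ⟨q, hq⟩ := exists_natCast_eq_abs_det fun j => hint (hf j)
  have hcoeff (j : Fin k) := exists_intCast_eq_abs_det_mul (fun j => hint (hf j))
    (hsum ▸ hint hz) j
  choose n hn using hcoeff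
  rw [smul_sub, Finset.smul_sum, hq, Nat.cast_smul_eq_nsmul]
  refine sub_mem (nsmul_mem hz q) (sum_mem fun j _ => ?_)
  rw [smul_smul, ← hq, hn, Int.cast_smul_eq_zsmul]
  exact zsmul_mem (hf j) _

end SeparatedDeterminants

section CircuitPoints

variable {V ι : Type*} [AddCommGroup V] [Module ℝ V] {k : ℕ} {π : V →ₗ[ℝ] Fin k → ℝ} {e : ι → V}

/-- The points of `ker π` obtained by cancelling `π (e i)` with a nonnegative combination of a basis
among the vectors `π (e j)`. Each is scaled by the determinant of its basis, which makes it a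
lattice point when the `e j` are. -/
def circuitPoints (π : V →ₗ[ℝ] Fin k → ℝ) (e : ι → V) : Set V :=
  {y | ∃ (i : ι) (f : Fin k → ι) (c : Fin k → ℝ), LinearIndependent ℝ (fun j => π (e (f j))) ∧
    0 ≤ c ∧ π (e i) + ∑ j, c j • π (e (f j)) = 0 ∧
    y = |(Matrix.of fun j => π (e (f j))).det| • (e i + ∑ j, c j • e (f j))}

lemma finite_circuitPoints [Finite ι] : (circuitPoints π e).Finite := by
  have hunion : circuitPoints π e = ⋃ (i : ι) (f : Fin k → ι),
      {y | ∃ c : Fin k → ℝ, LinearIndependent ℝ (fun j => π (e (f j))) ∧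
        0 ≤ c ∧ π (e i) + ∑ j, c j • π (e (f j)) = 0 ∧
        y = |(Matrix.of fun j => π (e (f j))).det| • (e i + ∑ j, c j • e (f j))} := by
    ext y
    simp only [circuitPoints, Set.mem_iUnion, Set.mem_ofPred_eq]
  rw [hunion]
  refine Set.finite_iUnion fun i => Set.finite_iUnion fun f => Set.Subsingleton.finite ?_
  rintro _ ⟨c, hind, -, hc, rfl⟩ _ ⟨c', -, -, hc', rfl⟩
  have hcc' : c = c' := hind.fintypeLinearCombination_injective (by
    simpa only [Fintype.linearCombination_apply] using add_left_cancel (hc.trans hc'.symm))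
  rw [hcc']

lemma circuitPoints_subset_ker : circuitPoints π e ⊆ LinearMap.ker π := by
  rintro _ ⟨i, f, c, -, -, hsum, rfl⟩
  rw [SetLike.mem_coe, LinearMap.mem_ker, map_smul, map_add, map_sum]
  simp only [map_smul, hsum, smul_zero]

lemma circuitPoints_subset_lattice {N : AddSubgroup V} (hπ : π '' N = intPts k)
    (he : ∀ i, e i ∈ N) : circuitPoints π e ⊆ N := by
  rintro _ ⟨i, f, c, -, -, hsum, rfl⟩
  have h := abs_det_smul_sub_mem (f := fun j => e (f j)) (c := -c) hπ (fun j => he (f j)) (he i) (by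
    simpa using eq_neg_of_add_eq_zero_left hsum)
  simpa using h

lemma circuitPoints_subset_smul {N : AddSubgroup V} {U : Set V} {b : ℝ} (hU : Convex ℝ U)
    (h0 : (0 : V) ∈ U) (hb : 0 < b) (hsep : Separated N U (LinearMap.ker π) b)
    (hπ : π '' N = intPts k) (he : ∀ i, e i ∈ U) : circuitPoints π e ⊆ ((k : ℝ) / b) ^ k • U := by
  rintro _ ⟨i, f, c, -, hc, hsum, rfl⟩
  obtain ⟨u, hu, huc⟩ := exists_add_sum_smul_eq_smul hU (he i) hc fun j => he (f j)
  have hC := natCast_div_pow_self_pos k hb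
  have hdet := hsep.abs_det_mul_le hU hb hπ (he i) (fun j => he (f j)) hc hsum
  have hs : 0 ≤ 1 + ∑ j, c j := add_nonneg zero_le_one (Finset.sum_nonneg fun j _ => hc j)
  rw [huc, smul_smul, Set.mem_smul_set_iff_inv_smul_mem₀ hC.ne', smul_smul, ← div_eq_inv_mul]
  exact hU.smul_mem_of_zero_mem h0 hu ⟨by positivity, (div_le_one hC).2 hdet⟩

lemma exists_circuit [Fintype ι] {c : ι → ℝ}
    (hspan : Submodule.span ℝ (Set.range fun i => π (e i)) = ⊤)
    (hc : 0 ≤ c) (hsum : ∑ i, c i • π (e i) = 0) (hc0 : c ≠ 0) :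
    ∃ (i : ι) (f : Fin k → ι) (c' : Fin k → ℝ), LinearIndependent ℝ (fun j => π (e (f j))) ∧
      0 ≤ c' ∧ π (e i) + ∑ j, c' j • π (e (f j)) = 0 ∧ c i ≠ 0 ∧ ∀ j, c' j ≠ 0 → c (f j) ≠ 0 := by
  classical
  obtain ⟨i, hi⟩ := Function.ne_iff.1 hc0
  have hi : 0 < c i := (hc i).lt_of_ne' hi
  obtain ⟨f, c', hind, hc', hsupp, hc'sum⟩ := exists_basis_conic_combination
    (Module.finrank_fin_fun ℝ) hspan (c := c - Pi.single i (c i)) fun j => by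
      obtain rfl | hj := eq_or_ne j i
      · simp
      · simpa [hj] using hc j
  refine ⟨i, f, fun j => (c i)⁻¹ * c' j, hind, fun j => mul_nonneg (inv_nonneg.2 hi.le) (hc' j),
    ?_, hi.ne', fun j hj hcj => hsupp j (right_ne_zero_of_mul hj) ?_⟩
  · have : ∑ j, c' j • π (e (f j)) = -(c i • π (e i)) := by
      simpa [sub_smul, hsum, Pi.single_apply, ite_smul] using hc'sum
    simp only [mul_smul, ← Finset.smul_sum, this, smul_neg, inv_smul_smul₀ hi.ne', add_neg_cancel]
  · have hji : f j ≠ i := fun h => hi.ne' (h ▸ hcj)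
    simp [hcj, hji]

lemma exists_combination_mem_circuitPoints [Fintype ι] {c : ι → ℝ}
    (hspan : Submodule.span ℝ (Set.range fun i => π (e i)) = ⊤)
    (hc : 0 ≤ c) (hsum : ∑ i, c i • π (e i) = 0) (hc0 : c ≠ 0) :
    ∃ g : ι → ℝ, 0 ≤ g ∧ g ≠ 0 ∧ Function.support g ⊆ Function.support c ∧
      ∑ i, g i • e i ∈ circuitPoints π e := by
  classical
  obtain ⟨i, f, c', hind, hc', hc'sum, hi, hsupp⟩ := exists_circuit hspan hc hsum hc0
  set D := |(Matrix.of fun j => π (e (f j))).det|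
  have hD : 0 < D := abs_det_pos_of_linearIndependent hind
  have hsingle (l : ι) : 0 ≤ (Pi.single l 1 : ι → ℝ) := Pi.single_nonneg.2 zero_le_one
  have htail : 0 ≤ ∑ j, c' j • (Pi.single (f j) 1 : ι → ℝ) :=
    Finset.sum_nonneg fun j _ => smul_nonneg (hc' j) (hsingle (f j))
  refine ⟨D • (Pi.single i 1 + ∑ j, c' j • Pi.single (f j) 1),
    smul_nonneg hD.le (add_nonneg (hsingle i) htail), Function.ne_iff.2 ⟨i, ?_⟩, ?_,
    i, f, c', hind, hc', hc'sum, ?_⟩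
  · refine (mul_pos hD (add_pos_of_pos_of_nonneg ?_ (htail i))).ne'
    simp
  · intro l hl hcl
    refine hl ?_
    have hli : l ≠ i := fun h => hi (h ▸ hcl)
    have hterm (j : Fin k) : c' j * (Pi.single (f j) 1 : ι → ℝ) l = 0 := by
      obtain hj | rfl := ne_or_eq l (f j)
      · simp [hj]
      · simpa [hcl] using hsupp j
    simp [hli, hterm]
  · rw [← Fintype.linearCombination_apply ℝ]
    simp only [map_smul, map_add, map_sum, Fintype.linearCombination_apply_single, one_smul, D]

lemma mem_hull_circuitPoints [Finite ι]
    (hspan : Submodule.span ℝ (Set.range fun i => π (e i)) = ⊤) {x : V} (hx : π x = 0)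
    (hxe : x ∈ PointedCone.hull ℝ (Set.range e)) :
    x ∈ PointedCone.hull ℝ (circuitPoints π e) := by
  cases nonempty_fintype ι
  obtain ⟨c, hc, rfl⟩ := mem_hull_range.1 hxe
  clear hxe
  induction hn : (Function.support c).ncard using Nat.strong_induction_on generalizing c with
  | _ n ih =>
  obtain rfl | hc0 := eq_or_ne c 0
  · simp
  simp only [map_sum, map_smul] at hx ih
  obtain ⟨g, hg, hg0, hgc, hgx⟩ := exists_combination_mem_circuitPoints hspan hc hx hc0
  obtain ⟨j, hj⟩ := Function.ne_iff.1 hg0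
  obtain ⟨t, ht, htc, l, hl, hl0⟩ := exists_nonneg_add_mul_eq_zero (β := -g) hc
    ⟨j, neg_lt_zero.2 ((hg j).lt_of_ne' hj)⟩
  have hsplit : ∑ i, c i • e i = ∑ i, (c i + t * (-g) i) • e i + t • ∑ i, g i • e i := by
    rw [Finset.smul_sum, ← Finset.sum_add_distrib]
    refine Finset.sum_congr rfl fun i _ => ?_
    rw [Pi.neg_apply]
    module
  have hgπ : π (∑ i, g i • e i) = 0 := circuitPoints_subset_ker hgx
  have hker : ∑ i, (c i + t * (-g) i) • π (e i) = 0 := by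
    have := congrArg π hsplit
    rw [map_add, map_smul, hgπ, smul_zero, add_zero, map_sum, map_sum] at this
    simpa only [map_smul, hx] using this.symm
  have hsupp : (Function.support fun i => c i + t * (-g) i) ⊂ Function.support c := by
    refine Set.ssubset_iff_subset_ne.2 ⟨fun i hi hci => hi ?_, fun heq => ?_⟩
    · simp [hci, Function.notMem_support.1 fun hgi => hgc hgi hci]
    · have : l ∈ Function.support c := hgc (by simpa using hl.ne)
      exact (heq.symm ▸ this) hl0
  rw [hsplit]
  exact add_mem (ih _ (hn ▸ Set.ncard_lt_ncard hsupp) _ htc hker rfl)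
    (Submodule.smul_mem _ (⟨t, ht⟩ : {c : ℝ // 0 ≤ c}) (Submodule.subset_span hgx))

end CircuitPoints

section Restriction

variable {V ι : Type*} [NormedAddCommGroup V] [NormedSpace ℝ V] {N : AddSubgroup V} {U : Set V}
  {e : ι → V} {b : ℝ} {k : ℕ} {π : V →ₗ[ℝ] Fin k → ℝ} {c : V}

lemma coe_mem_hull_iff {W κ : Type*} [AddCommGroup W] [Module ℝ W] {L : Submodule ℝ W}
    {x : κ → L} {y : L} :
    (y : W) ∈ PointedCone.hull ℝ (Set.range fun i => (x i : W)) ↔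
      y ∈ PointedCone.hull ℝ (Set.range x) := by
  have himage := Submodule.span_image (R := {c : ℝ // 0 ≤ c}) (s := Set.range x)
    (L.subtype.restrictScalars {c : ℝ // 0 ≤ c})
  rw [PointedCone.hull, PointedCone.hull, show (Set.range fun i => (x i : W)) =
    L.subtype.restrictScalars {c : ℝ // 0 ≤ c} '' Set.range x from Set.range_comp L.subtype x,
    himage]
  exact L.injective_subtype.mem_set_image

lemma LatticeGenerated.restrict_ker [Finite ι] (h : LatticeGenerated N U e) (hb : 0 < b)
    (hsep : Separated N U (LinearMap.ker π) b) (hsurj : Function.Surjective π)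
    (hπ : π '' N = intPts k) (hc : c ∈ interior U) (hcπ : π c = 0) :
    LatticeGenerated (N.comap (LinearMap.ker π).subtype.toAddMonoidHom)
      ((↑) ⁻¹' ((k / b : ℝ) ^ k • U) : Set (LinearMap.ker π))
      (fun y : circuitPoints π e => ⟨y, circuitPoints_subset_ker y.2⟩) := by
  have hspan : Submodule.span ℝ (Set.range fun i => π (e i)) = ⊤ := (h.map hsurj).span_gen
  have hhull (y : LinearMap.ker π) (hy : (y : V) ∈ PointedCone.hull ℝ (Set.range e)) :
      y ∈ PointedCone.hull ℝ (Set.range fun y : circuitPoints π e =>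
        (⟨y, circuitPoints_subset_ker y.2⟩ : LinearMap.ker π)) := by
    rw [← coe_mem_hull_iff]
    simpa using mem_hull_circuitPoints hspan y.2 hy
  refine ⟨(h.convex.smul _).linear_preimage (LinearMap.ker π).subtype,
    ⟨0, h.zero_mem, smul_zero _⟩, fun y => circuitPoints_subset_lattice hπ h.gen_mem_lattice y.2,
    fun y => circuitPoints_subset_smul h.convex h.zero_mem hb hsep hπ h.gen_mem y.2, ?_, ?_⟩
  · refine eq_top_iff.2 fun v _ => ?_
    obtain ⟨ε, hε, hεU⟩ := exists_pos_add_smul_mem_of_mem_interior hc (v : V)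
    have hmem {y : LinearMap.ker π} (hy : (y : V) ∈ U) :=
      Submodule.span_le_restrictScalars {c : ℝ // 0 ≤ c} ℝ _ (hhull y (h.subset_hull hy))
    have h1 := hmem (y := ⟨c, hcπ⟩) (interior_subset hc)
    have h2 := hmem (y := ⟨c, hcπ⟩ + ε • v) hεU
    rwa [Submodule.restrictScalars_mem, Submodule.add_mem_iff_right _ h1,
      Submodule.smul_mem_iff _ hε.ne'] at h2
  · rintro y ⟨u, hu, huy⟩
    refine hhull y (huy ▸ ?_)
    exact Submodule.smul_mem _ (⟨_, (natCast_div_pow_self_pos k hb).le⟩ : {c : ℝ // 0 ≤ c})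
      (h.subset_hull hu)

lemma LatticeFree.preimage_smul {a C : ℝ} (hU : Convex ℝ U) {L : Submodule ℝ V} (hC : C ≠ 0)
    (hfree : LatticeFree N U a) (hc : c ∈ interior U) (hcL : c ∈ L) :
    LatticeFree (N.comap L.subtype.toAddMonoidHom) ((↑) ⁻¹' (C • U) : Set L) (a / C) := by
  intro y hy hyN
  have hcC : C • c ∈ interior (C • U) := by
    rw [interior_smul₀ hC]
    exact Set.smul_mem_smul_set hc
  have hyU := coe_mem_interior_of_mem_interior_preimage (hU.smul C) hcC (L.smul_mem C hcL) hy
  rw [interior_smul₀ hC] at hyU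
  obtain ⟨u, hu, huy⟩ := hyU
  refine hfree u hu ?_
  have hyN : (a / C) • (y : V) ∈ N := hyN
  rwa [← huy, smul_smul, div_mul_cancel₀ _ hC] at hyN

end Restriction

section LinearProgram

variable {V ι : Type*} [AddCommGroup V] [Module ℝ V] {N : AddSubgroup V} {U : Set V} {e : ι → V}
  {b B : ℝ} {k : ℕ} {π : V →ₗ[ℝ] Fin k → ℝ} {ψ : V →ₗ[ℝ] ℝ}

lemma LatticeGenerated.boundedCost [Fintype ι] (h : LatticeGenerated N U e)
    (hψ : ∀ u ∈ U, π u = 0 → 0 ≤ ψ u) :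
    BoundedCost (fun i => π (e i)) (fun i => ψ (e i)) := by
  intro c hc hsum
  obtain ⟨u, hu, huc⟩ := exists_sum_smul_eq_smul h.convex ⟨0, h.zero_mem⟩ hc h.gen_mem
  have hval : ∑ i, c i * ψ (e i) = (∑ i, c i) * ψ u := by
    simpa only [map_sum, map_smul, smul_eq_mul] using congrArg ψ huc
  have hker : (∑ i, c i) • π u = 0 := by
    simpa only [map_sum, map_smul, hsum, eq_comm] using congrArg π huc
  have hs : 0 ≤ ∑ i, c i := Finset.sum_nonneg fun i _ => hc i
  rw [hval]
  obtain hs0 | hu0 := smul_eq_zero.1 hker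
  · rw [hs0, zero_mul]
  · exact mul_nonneg hs (hψ u hu hu0)

lemma IsDualBasis.exists_intCast_eq {η : (Fin k → ℝ) →ₗ[ℝ] ℝ} {f : Fin k → ι}
    (hη : IsDualBasis (fun i => π (e i)) (fun i => ψ (e i)) η f) (hπ : π '' N = intPts k)
    (he : ∀ i, e i ∈ N) (hψ : ∀ z ∈ N, π z = 0 → ∃ n : ℤ, ψ z = n) {z : V} (hz : z ∈ N) :
    ∃ n : ℤ, |(Matrix.of fun j => π (e (f j))).det| * (ψ z + η (π z)) = n := by
  obtain ⟨c, hc⟩ := (Submodule.mem_span_range_iff_exists_fun ℝ).1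
    ((hη.linearIndependent.span_eq_top_of_card_eq_finrank' (by simp)).ge
      (Submodule.mem_top (x := π z)))
  obtain ⟨n, hn⟩ := hψ _ (abs_det_smul_sub_mem hπ (fun j => he (f j)) hz hc.symm) (by
    simp [← hc])
  refine ⟨n, hn ▸ ?_⟩
  have htight (j : Fin k) : ψ (e (f j)) = -η (π (e (f j))) :=
    eq_neg_of_add_eq_zero_left (hη.tight j)
  simp [← hc, htight, sub_eq_add_neg, mul_add]

/-- Weak duality, with the cost of the primal solution bounded through
`Separated.abs_det_mul_le`. -/
lemma Separated.mul_add_apply_le (h : LatticeGenerated N U e) (hb : 0 < b)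
    (hsep : Separated N U (LinearMap.ker π) b) (hπ : π '' N = intPts k)
    (hψ : ∀ u ∈ U, π u = 0 → (k / b) ^ k * ψ u ∈ Set.Icc 0 B)
    {η : (Fin k → ℝ) →ₗ[ℝ] ℝ} (hη : ∀ i, 0 ≤ ψ (e i) + η (π (e i))) {f : Fin k → ι}
    {c : Fin k → ℝ} (hc : 0 ≤ c) {u : V} (hu : u ∈ U) (hsum : π u + ∑ j, c j • π (e (f j)) = 0)
    {q : ℝ} (hq : 0 ≤ q) (hqf : q ≤ |(Matrix.of fun j => π (e (f j))).det|) :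
    q * (ψ u + η (π u)) ≤ B := by
  obtain ⟨y, hy, hyc⟩ := exists_add_sum_smul_eq_smul h.convex hu hc fun j => h.gen_mem (f j)
  have hs : 0 < 1 + ∑ j, c j :=
    add_pos_of_pos_of_nonneg one_pos (Finset.sum_nonneg fun j _ => hc j)
  have hπy : π y = 0 := by
    have := congrArg π hyc
    simp only [map_add, map_sum, map_smul, hsum] at this
    exact (smul_eq_zero.1 this.symm).resolve_left hs.ne'
  have hC := natCast_div_pow_self_pos k hb
  have hψy : 0 ≤ ψ y := nonneg_of_mul_nonneg_right (hψ y hy hπy).1 hC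
  have hdual : ψ u + η (π u) ≤ (1 + ∑ j, c j) * ψ y := by
    have hval := congrArg ψ hyc
    simp only [map_add, map_sum, map_smul, smul_eq_mul] at hval
    rw [← hval, eq_neg_of_add_eq_zero_left hsum, map_neg, map_sum, ← Finset.sum_neg_distrib]
    gcongr with j
    rw [map_smul, smul_eq_mul, ← mul_neg]
    exact mul_le_mul_of_nonneg_left (by linarith [hη (f j)]) (hc j)
  calc q * (ψ u + η (π u)) ≤ q * ((1 + ∑ j, c j) * ψ y) := by gcongr
    _ ≤ |(Matrix.of fun j => π (e (f j))).det| * (1 + ∑ j, c j) * ψ y := by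
      rw [← mul_assoc]
      gcongr
    _ ≤ (k / b) ^ k * ψ y := by
      gcongr
      exact hsep.abs_det_mul_le h.convex hb hπ hu (fun j => h.gen_mem (f j)) hc hsum
    _ ≤ B := (hψ y hy hπy).2

end LinearProgram

section Lifting

variable {V ι : Type*} [NormedAddCommGroup V] [NormedSpace ℝ V] {N : AddSubgroup V} {U : Set V}
  {e : ι → V} {b B : ℝ} {k : ℕ} {π : V →ₗ[ℝ] Fin k → ℝ} {c : V}

lemma LatticeGenerated.hull_range_eq_top (h : LatticeGenerated N U e)
    (hsurj : Function.Surjective π) (hc : c ∈ interior U) (hcπ : π c = 0) :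
    PointedCone.hull ℝ (Set.range fun i => π (e i)) = ⊤ := by
  refine eq_top_iff.2 fun w _ => ?_
  obtain ⟨v, rfl⟩ := hsurj w
  obtain ⟨ε, hε, hεU⟩ := exists_pos_add_smul_mem_of_mem_interior hc v
  have hmem : π (c + ε • v) ∈ PointedCone.hull ℝ (Set.range fun i => π (e i)) :=
    (h.map hsurj).subset_hull ⟨_, hεU, rfl⟩
  rw [map_add, hcπ, zero_add, map_smul] at hmem
  convert Submodule.smul_mem _ (⟨ε⁻¹, by positivity⟩ : {c : ℝ // 0 ≤ c}) hmem using 1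
  exact (inv_smul_smul₀ hε.ne' _).symm

/-- Among the dual vertices extending `ψ`, one whose basis has minimal determinant `q` works: the
multiple by `q` clears its denominators, and `q` bounds every other determinant from below. -/
lemma Separated.hasIntegralForm_of_restrict_ker [Finite ι] (h : LatticeGenerated N U e)
    (hb : 0 < b) (hsep : Separated N U (LinearMap.ker π) b) (hsurj : Function.Surjective π)
    (hπ : π '' N = intPts k) (hc : c ∈ interior U) (hcπ : π c = 0)
    (hker : HasIntegralForm (N.comap (LinearMap.ker π).subtype.toAddMonoidHom)
      ((↑) ⁻¹' ((k / b : ℝ) ^ k • U) : Set (LinearMap.ker π)) B) :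
    HasIntegralForm N U B := by
  cases nonempty_fintype ι
  obtain ⟨ψ₀, hψ₀, hψ₀N, hψ₀U⟩ := hker
  obtain ⟨ψ, hψ⟩ := ψ₀.exists_extend
  have hψ (y : V) (hy : π y = 0) : ψ y = ψ₀ ⟨y, hy⟩ := DFunLike.congr_fun hψ ⟨y, hy⟩
  have hψU (u : V) (hu : u ∈ U) (hπu : π u = 0) : (k / b) ^ k * ψ u ∈ Set.Icc 0 B := by
    have := hψ₀U ((k / b : ℝ) ^ k • ⟨u, hπu⟩) (Set.smul_mem_smul_set hu)
    rwa [map_smul, ← hψ, smul_eq_mul] at this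
  have hdual := (h.boundedCost (π := π) fun u hu hπu =>
    nonneg_of_mul_nonneg_right (hψU u hu hπu).1 (natCast_div_pow_self_pos k hb)).exists_isDualBasis
      (Module.finrank_fin_fun ℝ) (h.hull_range_eq_top hsurj hc hcπ)
  obtain ⟨f, ⟨η, hη⟩, hmin⟩ := Set.exists_min_image
    {f : Fin k → ι | ∃ η, IsDualBasis (fun i => π (e i)) (fun i => ψ (e i)) η f}
    (fun f => |(Matrix.of fun j => π (e (f j))).det|) (Set.toFinite _) (by
      obtain ⟨η, f, -, hη, -⟩ := hdual 0
      exact ⟨f, η, hη⟩)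
  set q := |(Matrix.of fun j => π (e (f j))).det|
  have hqpos : 0 < q := abs_det_pos_of_linearIndependent hη.linearIndependent
  refine ⟨q • (ψ + η ∘ₗ π), fun h0 => hψ₀ (LinearMap.ext fun y => ?_), fun z hz => ?_,
    fun u hu => ⟨?_, ?_⟩⟩
  · have := DFunLike.congr_fun h0 (y : V)
    simpa [hqpos.ne', LinearMap.mem_ker.1 y.2, hψ] using this
  · exact hη.exists_intCast_eq hπ h.gen_mem_lattice
      (fun z hz hπz => by simpa only [hψ z hπz] using hψ₀N ⟨z, hπz⟩ hz) hz
  · exact nonneg_of_mem_hull (fun i => mul_nonneg hqpos.le (hη.nonneg i)) (h.subset_hull hu)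
  · obtain ⟨η', f', c, hη', hc, hsum⟩ := hdual (-π u)
    exact hsep.mul_add_apply_le h hb hπ hψU hη.nonneg hc hu (by rw [hsum, add_neg_cancel])
      hqpos.le (hmin f' ⟨η', hη'⟩)

end Lifting

section Quotients

variable {V W ι : Type*} [NormedAddCommGroup V] [NormedSpace ℝ V] [NormedAddCommGroup W]
  [NormedSpace ℝ W] {N : AddSubgroup V} {U : Set V} {e : ι → V} {L : Submodule ℝ V} {a b : ℝ}
  {f : V →ₗ[ℝ] W} {c u v : V}

lemma Separated.latticeFree_map (hU : Convex ℝ U) (h0 : 0 ∈ U) (hc : c ∈ interior U) (hb : 0 < b)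
    (hsep : Separated N U (LinearMap.ker f) b) (hker : ∀ u ∈ interior U, f u ≠ 0) :
    LatticeFree (N.map f.toAddMonoidHom) (f '' U) b := by
  rintro w hw ⟨z, hz, hzw⟩
  have hzw : f z = b • w := hzw
  obtain ⟨ε, hε, u, hu, huw⟩ := exists_pos_add_smul_mem_of_mem_interior hw w
  have hzu : z - (b / (1 + ε)) • u ∈ LinearMap.ker f := by
    rw [LinearMap.sub_mem_ker_iff, map_smul, huw, hzw]
    match_scalars
    field_simp
  have hzL := hsep z hz _ ⟨by positivity, div_lt_self hb (by linarith)⟩ u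
    ⟨u, hu, 0, h0, sub_zero u⟩ hzu
  rw [LinearMap.mem_ker, hzw, smul_eq_zero_iff_right hb.ne'] at hzL
  obtain ⟨u, hu, hu0⟩ := exists_mem_interior_of_mem_interior_image hU hc f hw
  exact hker u hu (hu0.trans hzL)

lemma LatticeFree.zero_notMem_interior (hfree : LatticeFree N U a) : 0 ∉ interior U :=
  fun h0 => hfree 0 h0 (by rw [smul_zero]; exact N.zero_mem)

lemma exists_ne_zero_forall_nonneg (hU : Convex ℝ U) (hne : (interior U).Nonempty)
    (h0 : 0 ∉ interior U) : ∃ ψ : V →ₗ[ℝ] ℝ, ψ ≠ 0 ∧ ∀ u ∈ U, 0 ≤ ψ u := by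
  obtain ⟨g, hg, hgU⟩ := geometric_hahn_banach_of_nonempty_interior_point hU h0 hne
  refine ⟨-g, fun hg0 => hg ?_, fun u hu => ?_⟩
  · ext v
    simpa using DFunLike.congr_fun hg0 v
  · simpa using hgU u hu

lemma LatticeFree.smul_add_smul_notMem (hU : Convex ℝ U) (h0 : 0 ∈ U) (hfree : LatticeFree N U a)
    (hu : u ∈ interior U) (hv : v ∈ U) {p s : ℝ} (hp : 0 < p) (hpa : p < a) (hs : 0 ≤ s)
    (hps : p + s ≤ a) : p • u + s • v ∉ N := by
  have hap : 0 < a - p := sub_pos.2 hpa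
  have ha : 0 < a := hp.trans hpa
  have hmem := hU.combo_interior_self_mem_interior hu
    (hU.smul_mem_of_zero_mem h0 hv (t := s / (a - p))
      ⟨by positivity, (div_le_one hap).2 (by linarith)⟩)
    (a := p / a) (b := (a - p) / a) (by positivity) (by positivity) (by field_simp; ring)
  convert hfree _ hmem using 2
  match_scalars <;> field_simp

/-- As `p = b` is allowed, the interior point has to be scaled up a little. -/
lemma Separated.smul_eq_smul_of_sub_mem (h0 : 0 ∈ U) (hU : Convex ℝ U) (hsep : Separated N U ⊥ b)
    (hu : u ∈ interior U) (hv : v ∈ U) {p s : ℝ} (hp : 0 < p) (hpb : p ≤ b) (hs : 0 ≤ s)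
    (hsb : s < b) (hmem : p • u - s • v ∈ N) : p • u = s • v := by
  obtain ⟨ε, hε, hεU⟩ := exists_pos_add_smul_mem_of_mem_interior hu u
  set p' := p / (1 + ε)
  have hp' : 0 < p' := by positivity
  set t := max p' s
  have ht : 0 < t := hp'.trans_le (le_max_left _ _)
  have htb : t < b := max_lt ((div_lt_self hp (by linarith)).trans_le hpb) hsb
  have hscale {r : ℝ} (hr : 0 ≤ r) (hrt : r ≤ t) {w : V} (hw : w ∈ U) : (r / t) • w ∈ U :=
    hU.smul_mem_of_zero_mem h0 hw ⟨by positivity, (div_le_one ht).2 hrt⟩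
  refine sub_eq_zero.1 (hsep _ hmem t ⟨ht.le, htb⟩ _ (Set.sub_mem_sub
    (hscale hp'.le (le_max_left _ _) hεU) (hscale hs (le_max_right _ _) hv)) ?_)
  have hpp : p' * (1 + ε) = p := div_mul_cancel₀ _ (by positivity)
  rw [Submodule.mem_bot, sub_eq_zero, ← hpp]
  match_scalars <;> field_simp

lemma exists_int_abs_mul_sub_lt (s : ℝ) (hb : 0 < b) (hb1 : b ≤ 1) :
    ∃ k j : ℤ, 0 < k ∧ k * b ≤ 1 ∧ |k * s - j| < b := by
  have hK : 0 < ⌊1 / b⌋₊ := Nat.floor_pos.2 ((one_le_div hb).2 hb1)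
  obtain ⟨j, k, hk, hkK, hjk⟩ := Real.exists_int_int_abs_mul_sub_le s hK
  refine ⟨k, j, hk, ?_, hjk.trans_lt ?_⟩
  · rw [← le_div_iff₀ hb]
    exact (Int.cast_le.2 hkK).trans (by simpa using Nat.floor_le (by positivity : 0 ≤ 1 / b))
  · rw [one_div_lt (by positivity) hb]
    exact Nat.lt_floor_add_one _

/-- Dirichlet approximation along `v` turns a lattice point of the projected `b ^ 2 • interior U`
into a lattice point of `a • interior U` or one violating the separation. -/
lemma LatticeFree.map_of_mem_face (hU : Convex ℝ U) (h0 : 0 ∈ U) (hfree : LatticeFree N U a)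
    (hb : 0 < b) (hb1 : b ≤ 1) (hba : 2 * b ≤ a) (hsep : Separated N U ⊥ b)
    {ψ : V →ₗ[ℝ] ℝ} (hψ : ψ ≠ 0) (hψU : ∀ u ∈ U, 0 ≤ ψ u) (hv : v ∈ U) (hvN : v ∈ N)
    (hψv : ψ v = 0) (hc : c ∈ interior U) (hf : LinearMap.ker f = Submodule.span ℝ {v}) :
    LatticeFree (N.map f.toAddMonoidHom) (f '' U) (b ^ 2) := by
  rintro w hw ⟨z, hz, hzw⟩
  obtain ⟨u, hu, rfl⟩ := exists_mem_interior_of_mem_interior_image hU hc f hw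
  have hzu : z - b ^ 2 • u ∈ LinearMap.ker f := by
    rw [LinearMap.sub_mem_ker_iff, map_smul]
    exact hzw
  rw [hf, Submodule.mem_span_singleton] at hzu
  obtain ⟨s, hs⟩ := hzu
  obtain ⟨k, j, hkpos, hkb, hjk⟩ := exists_int_abs_mul_sub_lt s hb hb1
  set p := k * b ^ 2
  set δ := k * s - j
  have hp : 0 < p := mul_pos (Int.cast_pos.2 hkpos) (pow_pos hb 2)
  have hpb : p ≤ b := by nlinarith
  have hmem : p • u + δ • v ∈ N := by
    convert sub_mem (zsmul_mem hz k) (zsmul_mem hvN j) using 1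
    rw [sub_eq_iff_eq_add.1 hs.symm, ← Int.cast_smul_eq_zsmul ℝ, ← Int.cast_smul_eq_zsmul ℝ]
    module
  obtain hδ | hδ := le_or_gt 0 δ
  · refine hfree.smul_add_smul_notMem hU h0 hu hv hp (by linarith) hδ ?_ hmem
    linarith [le_abs_self δ]
  · have heq := hsep.smul_eq_smul_of_sub_mem h0 hU hu hv hp hpb (neg_nonneg.2 hδ.le)
      (abs_of_neg hδ ▸ hjk) (by rwa [neg_smul, sub_neg_eq_add])
    have := congrArg ψ heq
    rw [map_smul, map_smul, hψv, smul_zero, smul_eq_zero_iff_right hp.ne'] at this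
    exact (pos_of_mem_interior hψ hψU hu).ne' this

end Quotients

section Induction

universe u

variable {V ι : Type u} [NormedAddCommGroup V] [NormedSpace ℝ V] [FiniteDimensional ℝ V]
  {N : AddSubgroup V} {U : Set V} {e : ι → V} {L : Submodule ℝ V} {a b : ℝ} {c : V}

lemma Separated.hasIntegralForm_of_finrank_eq_one (h : LatticeGenerated N U e) (hb : 0 < b)
    (hsep : Separated N U ⊥ b) (h0 : 0 ∉ interior U) (hd : Module.finrank ℝ V = 1) :
    HasIntegralForm N U (1 / b) := by
  obtain ⟨π, hsurj, hker, hπ⟩ := hsep.exists_coordinates (k := 1) h hb (by simp [hd])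
  obtain ⟨ψ, hψ, hψU⟩ := exists_ne_zero_forall_nonneg h.convex h.interior_nonempty h0
  set φ : Module.Dual ℝ V := LinearMap.proj 0 ∘ₗ π
  have hφN : ∀ z ∈ N, ∃ n : ℤ, φ z = n := fun z hz => hπ.subset ⟨z, hz, rfl⟩ 0
  have hφU : ∀ u ∈ U, |φ u| ≤ 1 / b := fun u hu => by
    rw [← hker] at hsep
    simpa [φ] using hsep.abs_det_le h.convex ⟨0, h.zero_mem⟩ hb hπ (y := fun _ => u)
      fun _ => ⟨u, hu, 0, h.zero_mem, sub_zero u⟩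
  have hφ : φ ≠ 0 := fun hφ0 => by
    obtain ⟨v, hv⟩ := hsurj 1
    simpa [φ, hv] using LinearMap.congr_fun hφ0 v
  obtain ⟨r, rfl⟩ := exists_smul_eq_of_finrank_eq_one (Subspace.dual_finrank_eq.trans hd) hφ ψ
  obtain hr | hr := (left_ne_zero_of_smul hψ).lt_or_gt
  · refine ⟨-φ, neg_ne_zero.2 hφ, fun z hz => ?_, fun u hu =>
      ⟨neg_nonneg.2 (nonpos_of_mul_nonneg_right (hψU u hu) hr),
        (neg_le_abs _).trans (hφU u hu)⟩⟩
    obtain ⟨n, hn⟩ := hφN z hz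
    exact ⟨-n, by rw [LinearMap.neg_apply, hn, Int.cast_neg]⟩
  · exact ⟨φ, hφ, hφN, fun u hu =>
      ⟨nonneg_of_mul_nonneg_right (hψU u hu) hr, (le_abs_self _).trans (hφU u hu)⟩⟩

/-- The bound `1 / γ(n, a)` for integral forms, for all spaces of dimension `n` in the universe
`u`. -/
def FormBound (n : ℕ) : Prop :=
  ∀ (V ι : Type u) [NormedAddCommGroup V] [NormedSpace ℝ V] [FiniteDimensional ℝ V] [Finite ι]
    (N : AddSubgroup V) (U : Set V) (e : ι → V) (a : ℝ), Module.finrank ℝ V = n →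
    LatticeGenerated N U e → 0 < a → LatticeFree N U a → HasIntegralForm N U (1 / gammaFn n a)

lemma FormBound.hasIntegralForm_of_forall_notMem [Finite ι] {k : ℕ} (ih : FormBound.{u} k)
    (h : LatticeGenerated N U e) (hk : Module.finrank ℝ L + k = Module.finrank ℝ V) (hb : 0 < b)
    (hsep : Separated N U L b) (hL : ∀ u ∈ interior U, u ∉ L) :
    HasIntegralForm N U (1 / gammaFn k b) := by
  have := L.closed_of_finiteDimensional
  have hdim := L.finrank_quotient_add_finrank
  obtain ⟨c, hc⟩ := h.interior_nonempty
  refine (ih (V ⧸ L) ι _ _ _ b (by omega) (h.map L.mkQ_surjective) hb ?_).comap L.mkQ_surjective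
  refine Separated.latticeFree_map h.convex h.zero_mem hc hb (by rwa [L.ker_mkQ]) fun u hu => ?_
  rw [Submodule.mkQ_apply, Ne, Submodule.Quotient.mk_eq_zero]
  exact hL u hu

lemma FormBound.hasIntegralForm_of_separated_bot [Finite ι] {n : ℕ} (ih : FormBound.{u} n)
    (hn : 1 ≤ n) (h : LatticeGenerated N U e) (hd : Module.finrank ℝ V = n + 1) (hb : 0 < b)
    (hb1 : b ≤ 1) (hba : 2 * b ≤ a) (hfree : LatticeFree N U a) (hsep : Separated N U ⊥ b) :
    HasIntegralForm N U (1 / gammaFn n (b ^ 2)) := by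
  obtain ⟨c, hc⟩ := h.interior_nonempty
  obtain ⟨ψ₀, hψ₀, hψ₀U⟩ := exists_ne_zero_forall_nonneg h.convex ⟨c, hc⟩
    hfree.zero_notMem_interior
  obtain ⟨i, ψ, hψ, hψe, hi, hψi⟩ := exists_mem_ker_of_forall_nonneg h.span_gen (by omega) hψ₀
    fun i => hψ₀U _ (h.gen_mem i)
  set L := Submodule.span ℝ {e i}
  have := L.closed_of_finiteDimensional
  have hL : Module.finrank ℝ L = 1 := finrank_span_singleton hi
  have hdim := L.finrank_quotient_add_finrank
  refine (ih (V ⧸ L) ι _ _ _ (b ^ 2) (by omega) (h.map L.mkQ_surjective) (by positivity)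
    ?_).comap L.mkQ_surjective
  exact hfree.map_of_mem_face h.convex h.zero_mem hb hb1 hba hsep hψ
    (fun u hu => nonneg_of_mem_hull hψe (h.subset_hull hu)) (h.gen_mem i) (h.gen_mem_lattice i)
    hψi hc L.ker_mkQ

lemma FormBound.hasIntegralForm_of_mem_interior [Finite ι] {r k : ℕ} (ih : FormBound.{u} r)
    (h : LatticeGenerated N U e) (ha : 0 < a) (hfree : LatticeFree N U a) (hb : 0 < b)
    (hsep : Separated N U L b) (hr : Module.finrank ℝ L = r)
    (hk : r + k = Module.finrank ℝ V) (hc : c ∈ interior U) (hcL : c ∈ L) :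
    HasIntegralForm N U (1 / gammaFn r (a / (k / b) ^ k)) := by
  obtain ⟨π, hsurj, rfl, hπ⟩ := hsep.exists_coordinates h hb (hr ▸ hk)
  have hC := natCast_div_pow_self_pos k hb
  have := (finite_circuitPoints (π := π) (e := e)).to_subtype
  exact hsep.hasIntegralForm_of_restrict_ker h hb hsurj hπ hc hcL
    (ih _ _ _ _ _ _ hr (h.restrict_ker hb hsep hsurj hπ hc hcL) (div_pos ha hC)
      (hfree.preimage_smul h.convex hC.ne' hc hcL))

theorem formBound {n : ℕ} (hn : 1 ≤ n) : FormBound.{u} n := by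
  induction n using Nat.strong_induction_on with | _ n ih
  intro V ι _ _ _ _ N U e a hd h ha hfree
  obtain ⟨L, hL, hsep⟩ := h.exists_separated ha.le hfree
  have han : a ≤ n := hd ▸ h.le_finrank ha hfree
  rw [hd] at hsep
  have hn0 : (0 : ℝ) < n := by positivity
  obtain ⟨b, rfl⟩ : ∃ b, a = n * b := ⟨a / n, (mul_div_cancel₀ a hn0.ne').symm⟩
  rw [mul_div_cancel_left₀ _ hn0.ne'] at hsep
  have hb : 0 < b := pos_of_mul_pos_right ha hn0.le
  have hb1 : b ≤ 1 := le_of_mul_le_mul_left (by simpa using han) hn0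
  obtain rfl | hbot := eq_or_ne L ⊥
  · obtain rfl | hn1 := hn.eq_or_lt
    · simpa [gammaFn] using
        hsep.hasIntegralForm_of_finrank_eq_one h hb hfree.zero_notMem_interior hd
    · obtain ⟨m, rfl⟩ := Nat.exists_eq_add_of_lt hn1
      rw [add_comm 1 m, gammaFn_succ_mul (by omega)]
      refine (ih (m + 1) (by omega) (by omega)).hasIntegralForm_of_separated_bot (by omega) h
        (by omega) hb hb1 ?_ hfree hsep
      gcongr
      exact_mod_cast (by omega : 2 ≤ 1 + m + 1)
  have hr : 1 ≤ Module.finrank ℝ L := Submodule.one_le_finrank_iff.2 hbot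
  obtain ⟨k, hk⟩ := Nat.exists_eq_add_of_lt (hd ▸ Submodule.finrank_lt hL)
  by_cases hmeet : ∃ c ∈ interior U, c ∈ L
  · obtain ⟨c, hc, hcL⟩ := hmeet
    refine ((ih _ (by omega) hr).hasIntegralForm_of_mem_interior (k := k + 1) h ha hfree hb hsep
      rfl (by omega) hc hcL).mono (one_div_le_one_div_of_le ?_ ?_)
    · exact gammaFn_pos hn ha
    · have := gammaFn_add_mul_le hr (k + 1) hb hb1
      rwa [← add_assoc, ← hk] at this
  · push Not at hmeet
    refine ((ih (k + 1) (by omega) (by omega)).hasIntegralForm_of_forall_notMem h (by omega) hb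
      hsep hmeet).mono (one_div_le_one_div_of_le (gammaFn_pos hn ha) ?_)
    exact gammaFn_mul_le_of_lt (by omega) (by omega) hb.le hb1

end Induction

section Euclidean

lemma coe_hull_eq_coneHull {V : Type*} [AddCommGroup V] [Module ℝ V] (s : Set V) :
    (PointedCone.hull ℝ s : Set V) = coneHull s := by
  ext x
  rw [SetLike.mem_coe, PointedCone.hull, Submodule.mem_span_set']
  constructor
  · rintro ⟨n, c, v, rfl⟩
    exact ⟨n, fun i => c i, fun i => v i, fun i => (c i).2, fun i => (v i).2, rfl⟩
  · rintro ⟨n, c, v, hc, hv, rfl⟩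
    exact ⟨n, fun i => ⟨c i, hc i⟩, fun i => ⟨v i, hv i⟩, rfl⟩

lemma convex_coneHull {V : Type*} [AddCommGroup V] [Module ℝ V] (s : Set V) :
    Convex ℝ (coneHull s) :=
  coe_hull_eq_coneHull s ▸ (PointedCone.hull ℝ s).convex

lemma HasIntegralForm.exists_mem_intPts {d : ℕ} {N : AddSubgroup (Fin d → ℝ)}
    {U : Set (Fin d → ℝ)} {B : ℝ} (hN : (N : Set (Fin d → ℝ)) = intPts d)
    (h : HasIntegralForm N U B) :
    ∃ φ ∈ intPts d, φ ≠ 0 ∧ ∀ u ∈ U, ∑ i, φ i * u i ∈ Set.Icc 0 B := by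
  obtain ⟨φ, hφ, hφN, hφU⟩ := h
  obtain ⟨w, rfl⟩ := (dotProductEquiv ℝ (Fin d)).surjective φ
  refine ⟨w, fun i => ?_, fun hw => hφ (by rw [hw, map_zero]), hφU⟩
  simpa using hφN (Pi.single i 1)
    (hN.ge fun j => ⟨if j = i then 1 else 0, by simp [Pi.single_apply]⟩)

end Euclidean

theorem stmt_17_general (d : ℕ) (hd : 1 ≤ d) (σ : Set (Fin d → ℝ))
    (hσdim : Submodule.span ℝ σ = ⊤) (U : Set (Fin d → ℝ)) (hU : Convex ℝ U)
    (hU0 : (0 : Fin d → ℝ) ∈ U) (hUσ : U ⊆ σ)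
    (hgen : ∃ S' : Finset (Fin d → ℝ), (S' : Set (Fin d → ℝ)) ⊆ intPts d ∩ U ∧
      coneHull (S' : Set (Fin d → ℝ)) = σ)
    (a : ℝ) (ha : 0 < a) (hmld : intPts d ∩ interior (a • U) = ∅) :
    ∃ φ : Fin d → ℝ, φ ∈ intPts d ∧ φ ≠ 0 ∧
      (∀ e ∈ σ, 0 ≤ ∑ i, φ i * e i) ∧
      (∀ u ∈ U, (∑ i, φ i * u i) ∈ Set.Icc 0 (1 / gammaFn d a)) := by
  obtain ⟨E, hE, rfl⟩ := hgen
  set N := (Submodule.span ℤ (Set.range (Pi.basisFun ℝ (Fin d)))).toAddSubgroup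
  have hN : (N : Set (Fin d → ℝ)) = intPts d := coe_span_basisFun d
  have hgen : LatticeGenerated N U ((↑) : E → Fin d → ℝ) := by
    refine ⟨hU, hU0, fun e => hN.ge (hE e.2).1, fun e => (hE e.2).2, ?_, ?_⟩
    · rw [eq_top_iff, ← hσdim, ← coe_hull_eq_coneHull, Subtype.range_coe]
      exact Submodule.span_le.2 (Submodule.span_le_restrictScalars _ ℝ _)
    · rwa [Subtype.range_coe, coe_hull_eq_coneHull]
  have hfree : LatticeFree N U a := fun u hu huN =>
    (hmld.subset ⟨hN.le huN, by
      rw [interior_smul₀ ha.ne']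
      exact Set.smul_mem_smul_set hu⟩ : a • u ∈ (∅ : Set _))
  obtain ⟨φ, hφ, hφ0, hφU⟩ :=
    (formBound hd _ _ N U _ a (by simp) hgen ha hfree).exists_mem_intPts hN
  refine ⟨φ, hφ, hφ0, ?_, hφU⟩
  rintro _ ⟨n, c, v, hc, hv, rfl⟩
  change 0 ≤ φ ⬝ᵥ ∑ j, c j • v j
  simp only [dotProduct_sum, dotProduct_smul]
  exact Finset.sum_nonneg fun j _ => mul_nonneg (hc j) (hφU _ (hE (hv j)).2).1

/-- Let `N` be a lattice of rank `d ≥ 1` with dual lattice `M` (modelled as `ℤ^d ⊆ ℝ^d`),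
and let `σ ⊆ N_ℝ` be a rational polyhedral cone with `dim σ = d` and `σ ≠ N_ℝ`. Let
`U = conv(F) + cone(G) ⊆ N_ℝ` with `F ⊆ N_ℝ` finite and `G ⊆ N` finite, such that
`0 ∈ U`, `⋃_{t>0} tU = σ`, and `N ∩ U` contains a finite set generating `σ` as a convex
cone. Let `a > 0` with `N ∩ int(aU) = ∅`. Then there exists a nonzero `φ ∈ M` with `φ_ℝ`
nonnegative on `σ` and `φ_ℝ(U) ⊆ [0, 1/γ(d, a)]`. -/
theorem stmt_17 (d : ℕ) (hd : 1 ≤ d)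
    (S : Finset (Fin d → ℝ)) (hS : (S : Set (Fin d → ℝ)) ⊆ intPts d)
    (σ : Set (Fin d → ℝ)) (hσ : σ = coneHull (S : Set (Fin d → ℝ)))
    (hσdim : Submodule.span ℝ σ = ⊤) (hσne : σ ≠ Set.univ)
    (F G : Finset (Fin d → ℝ)) (hG : (G : Set (Fin d → ℝ)) ⊆ intPts d)
    (U : Set (Fin d → ℝ))
    (hUdef : U = {x | ∃ p ∈ convexHull ℝ (F : Set (Fin d → ℝ)),
      ∃ s ∈ coneHull (G : Set (Fin d → ℝ)), x = p + s})
    (hU0 : (0 : Fin d → ℝ) ∈ U)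
    (hUσ : {x | ∃ t : ℝ, 0 < t ∧ ∃ u ∈ U, x = t • u} = σ)
    (hgen : ∃ S' : Finset (Fin d → ℝ), (S' : Set (Fin d → ℝ)) ⊆ intPts d ∩ U ∧
      coneHull (S' : Set (Fin d → ℝ)) = σ)
    (a : ℝ) (ha : 0 < a)
    (hmld : intPts d ∩ interior (a • U) = ∅) :
    ∃ φ : Fin d → ℝ, φ ∈ intPts d ∧ φ ≠ 0 ∧
      (∀ e ∈ σ, 0 ≤ ∑ i, φ i * e i) ∧
      (∀ u ∈ U, (∑ i, φ i * u i) ∈ Set.Icc 0 (1 / gammaFn d a)) := by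
  have hU : U = convexHull ℝ (F : Set (Fin d → ℝ)) + coneHull (G : Set (Fin d → ℝ)) := by
    ext x
    simp only [hUdef, Set.mem_add, Set.mem_ofPred_eq, eq_comm]
  exact stmt_17_general d hd σ hσdim U (hU ▸ (convex_convexHull ℝ _).add (convex_coneHull _)) hU0
    (hUσ ▸ fun u hu => ⟨1, one_pos, u, hu, (one_smul ℝ u).symm⟩) hgen a ha hmld
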